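/- Dirichlet energy of the coupled difference in an annulus: For every Λ̄ > 0, u ∈ ℝ² and ε > 0 there exists a constant c = c(Λ̄, ε, V) > 0 such that the following holds for every finite connected D ⊆ ℤ² of diameter R ≥ 2 and all boundary conditions ψ, ψ̃ : ∂D → ℝ with max_{x∈∂D}|ψ(x) − u·x| ≤ Λ̄ (log R)^Λ̄ and max_{x∈∂D}|ψ̃(x) − u·x| ≤ Λ̄ (log R)^Λ̄. There exist R₁ with R^{1−ε} ≤ R₁ ≤ 2R^{1−ε} and a coupling (h^ψ, h^ψ̃) of P_D^ψ and P_D^ψ̃ such that, with h̄ = h^ψ − h^ψ̃ and R₂ = R₁ + R^{1−5ε}, Σ over edges b with both endpoints x satisfying R₁ ≤ dist(x, ∂D) < R₂ of E|∇h̄(b)|² is at most c·R^{−ε}, and Σ over edges b with both endpoints in D(R₁) of E|∇h̄(b)|² is at most c·R^{3ε}. -/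

import Mathlib

/-!
The Dirichlet energy bound follows from a Caccioppoli inequality for a well-chosen coupling.

Naively, `h̄ = h^ψ - h^ψ̃` evolving under the Langevin dynamics driven by the same noise solves a
linear parabolic equation with coefficients in `[aV, AV]`, and in a stationary coupling the drift of
`∑ η(x)² h̄(x)²` vanishes, which bounds `∑ η² E|∇h̄|²` by `∑ |∇η|² E h̄²`; the values of `h̄` are
bounded by the maximum `M` of `|ψ - ψ̃|`. Stochastic calculus is avoided as follows. Consider the
transport cost `E ∑ θ_x(h̄(x))` with `θ_x(s) = δ η(x)² s² / 2 + T(s)² / 2`, where `T(s)` is the part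
of `s` outside `[-M, M]` (`overshoot`), and take a coupling with almost minimal cost. Moving both
fields by one small Barker step at a single site, with the same proposal and the same uniform
variable, gives another coupling (`coupledStep_isCoupling`), so the cost cannot drop by much; to
second order in the step size this says that
`∑_x E θ_x'(h̄(x)) (∂_x H^ψ(h^ψ) - ∂_x H^ψ̃(h^ψ̃))` is almost nonpositive
(`exists_stationary_coupling`). Summation by parts turns this sum into an edge sum, which is bounded
below edge by edge (`edge_caccioppoli`). The term `T²` replaces the maximum principle: it contributes
the energy of `T(h̄)`, which vanishes on `∂D`, so for `δ` small a Poincaré inequality absorbs the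
error terms containing `T(h̄)`, and only those containing `M` remain
(`exists_caccioppoli_coupling`). The smallness of `δ` depends on `D`, but `δ` cancels from the result
`∑ η² E|∇h̄|² ≤ 10 (AV/aV)² ‖∇η‖∞² M² (|D*| + 1)`.

With `η = min(1, dist(·, ∂D) / R^{1-ε})`, `M = 2Λ (log R)^Λ` and `|D*| ≤ 36 R²`, the energy in
`D(R^{1-ε})` is at most `c R^{3ε}`, the logarithms being absorbed in `R^ε`. There is room for more
than `R^{4ε}` disjoint annuli of width `R^{1-5ε}` with inner radius in `[R^{1-ε}, 2R^{1-ε}]`, and one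
of them carries at most the average energy `c R^{3ε} / R^{4ε}` (`exists_good_annulus`).
-/

open MeasureTheory ProbabilityTheory Real
open scoped ENNReal NNReal Classical

noncomputable section

abbrev Z2 := ℤ × ℤ

/-- Nearest-neighbor adjacency in `ℤ²` (Euclidean distance one). -/
def adjZ (x y : Z2) : Prop := (x.1 - y.1) ^ 2 + (x.2 - y.2) ^ 2 = 1

/-- Exterior vertex boundary `∂D` of a set `D ⊆ ℤ²`. -/
def bdry (D : Set Z2) : Set Z2 := {x | x ∉ D ∧ ∃ y ∈ D, adjZ x y}

/-- Euclidean distance on `ℤ²`. -/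
def edist2 (x y : Z2) : ℝ :=
  Real.sqrt (((x.1 : ℝ) - (y.1 : ℝ)) ^ 2 + ((x.2 : ℝ) - (y.2 : ℝ)) ^ 2)

/-- Euclidean distance from a point to a set. -/
def distToSet (x : Z2) (S : Set Z2) : ℝ := sInf (edist2 x '' S)

/-- Euclidean diameter of a set in `ℤ²`. -/
def diamZ (D : Set Z2) : ℝ := sSup {d : ℝ | ∃ x ∈ D, ∃ y ∈ D, d = edist2 x y}

/-- Discrete Euclidean ball. -/
def ballZ (y : Z2) (r : ℝ) : Set Z2 := {z | edist2 z y ≤ r}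

/-- Positively oriented nearest-neighbor edges with at least one endpoint in `D`. -/
def edgesOf (D : Set Z2) : Set (Z2 × Z2) :=
  {b | (b.2 = b.1 + ((1, 0) : Z2) ∨ b.2 = b.1 + ((0, 1) : Z2)) ∧ (b.1 ∈ D ∨ b.2 ∈ D)}

/-- Positively oriented nearest-neighbor edges with both endpoints in `D`. -/
def intEdges (D : Set Z2) : Set (Z2 × Z2) :=
  {b | (b.2 = b.1 + ((1, 0) : Z2) ∨ b.2 = b.1 + ((0, 1) : Z2)) ∧ b.1 ∈ D ∧ b.2 ∈ D}

/-- Edges with one endpoint in `D` and the other in `∂D`. -/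
def bdEdges (D : Set Z2) : Set (Z2 × Z2) :=
  {b | (b.2 = b.1 + ((1, 0) : Z2) ∨ b.2 = b.1 + ((0, 1) : Z2)) ∧
    ((b.1 ∈ D ∧ b.2 ∈ bdry D) ∨ (b.1 ∈ bdry D ∧ b.2 ∈ D))}

/-- The endpoint of an edge lying outside `D` (for boundary edges). -/
def bEnd (D : Set Z2) (b : Z2 × Z2) : Z2 := if b.1 ∈ D then b.2 else b.1

/-- Discrete gradient of `f` across the oriented edge `b`. -/
def grad (f : Z2 → ℝ) (b : Z2 × Z2) : ℝ := f b.2 - f b.1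

/-- `D ⊆ ℤ²` is connected (as an induced subgraph of the nearest-neighbor lattice). -/
def DiscConnected (D : Set Z2) : Prop :=
  D.Nonempty ∧ ∀ x ∈ D, ∀ y ∈ D, ∃ (n : ℕ) (p : ℕ → Z2),
    p 0 = x ∧ p n = y ∧ (∀ i ≤ n, p i ∈ D) ∧ ∀ i < n, adjZ (p i) (p (i + 1))

/-- `h ∨ φ`: the field `h` on `D` extended by the boundary condition `φ` off `D`. -/
def vee (D : Finset Z2) (h : ↥D → ℝ) (φ : Z2 → ℝ) : Z2 → ℝ :=
  fun x => if hx : x ∈ D then h ⟨x, hx⟩ else φ x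

/-- Ginzburg–Landau Hamiltonian `∑_{b ∈ D*} V(∇(h∨φ)(b))`. -/
def glEnergy (V : ℝ → ℝ) (D : Finset Z2) (φ : Z2 → ℝ) (h : ↥D → ℝ) : ℝ :=
  ∑ᶠ b ∈ edgesOf (D : Set Z2), V (grad (vee D h φ) b)

/-- Unnormalized GL measure: density `exp(−H)` w.r.t. Lebesgue measure on `ℝ^D`. -/
def glFree (V : ℝ → ℝ) (D : Finset Z2) (φ : Z2 → ℝ) : Measure (↥D → ℝ) :=
  volume.withDensity fun h => ENNReal.ofReal (Real.exp (-(glEnergy V D φ h)))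

/-- `P` is the GL measure on `D` with potential `V` and boundary condition `φ`:
a probability measure proportional to `exp(−H) dh`. -/
def IsGL (V : ℝ → ℝ) (D : Finset Z2) (φ : Z2 → ℝ) (P : Measure (↥D → ℝ)) : Prop :=
  IsProbabilityMeasure P ∧ ∃ c : ℝ≥0∞, c ≠ 0 ∧ c ≠ ⊤ ∧ P = c • glFree V D φ

/-- `μ` is a coupling of `P` and `Q`. -/
def IsCoupling {α : Type*} [MeasurableSpace α] (μ : Measure (α × α)) (P Q : Measure α) : Prop :=
  IsProbabilityMeasure μ ∧ μ.map Prod.fst = P ∧ μ.map Prod.snd = Q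

/-- `f` is discrete-harmonic at `x`: the sum of the increments to the four neighbors vanishes. -/
def DiscHarmAt (f : Z2 → ℝ) (x : Z2) : Prop :=
  f (x + ((1, 0) : Z2)) + f (x - ((1, 0) : Z2)) + f (x + ((0, 1) : Z2)) + f (x - ((0, 1) : Z2))
    - 4 * f x = 0

/-- `D(r) = {x ∈ D : dist(x, ∂D) ≥ r}`. -/
def innerSet (D : Finset Z2) (r : ℝ) : Set Z2 :=
  {x | x ∈ D ∧ r ≤ distToSet x (bdry (D : Set Z2))}


/-- The annulus `{x ∈ D : R₁ ≤ dist(x, ∂D) < R₂}`. -/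
def annul (D : Finset Z2) (R1 R2 : ℝ) : Set Z2 :=
  {x | x ∈ D ∧ R1 ≤ distToSet x (bdry (D : Set Z2)) ∧ distToSet x (bdry (D : Set Z2)) < R2}

/-! ### Couplings that are almost stationary under synchronous single-site dynamics -/

section Transport

set_option linter.unusedSectionVars false

variable {ι : Type*} [Fintype ι]

/-- Barker acceptance probability of the move `h ↦ h + v` for the density `exp (-H)`. -/
def accept (H : (ι → ℝ) → ℝ) (v h : ι → ℝ) : ℝ := 1 / (1 + Real.exp (H (h + v) - H h))

lemma accept_nonneg (H : (ι → ℝ) → ℝ) (v h : ι → ℝ) : 0 ≤ accept H v h := by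
  unfold accept; positivity

lemma accept_le_one (H : (ι → ℝ) → ℝ) (v h : ι → ℝ) : accept H v h ≤ 1 := by
  unfold accept
  rw [div_le_one (by positivity)]
  linarith [Real.exp_pos (H (h + v) - H h)]

lemma measurable_accept {H : (ι → ℝ) → ℝ} (hH : Measurable H) (v : ι → ℝ) :
    Measurable (accept H v) := by
  unfold accept
  fun_prop

/-- Detailed balance for the Barker move with respect to `exp (-H) dh`. -/
lemma detailed_balance {H : (ι → ℝ) → ℝ} (hH : Measurable H) {P : Measure (ι → ℝ)} {c : ℝ≥0∞}
    (hP : P = c • (volume : Measure (ι → ℝ)).withDensity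
      (fun h => ENNReal.ofReal (Real.exp (-(H h)))))
    (v : ι → ℝ) {f : (ι → ℝ) → ℝ≥0∞} (hf : Measurable f) :
    ∫⁻ h, ENNReal.ofReal (accept H v h) * f (h + v) ∂P
      = ∫⁻ h, ENNReal.ofReal (accept H (-v) h) * f h ∂P := by
  have h1 := measurable_accept hH v
  have h2 := measurable_accept hH (-v)
  have h3 : Measurable fun h => f (h + v) := hf.comp (measurable_add_const v)
  rw [hP, lintegral_smul_measure, lintegral_smul_measure,
    lintegral_withDensity_eq_lintegral_mul _ (by fun_prop) (by fun_prop),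
    lintegral_withDensity_eq_lintegral_mul _ (by fun_prop) (by fun_prop)]
  congr 1
  rw [← lintegral_add_right_eq_self
    ((fun h => ENNReal.ofReal (Real.exp (-(H h)))) *
      fun h => ENNReal.ofReal (accept H (-v) h) * f h) v]
  refine lintegral_congr fun h => ?_
  simp only [Pi.mul_apply, ← mul_assoc]
  rw [← ENNReal.ofReal_mul (by positivity), ← ENNReal.ofReal_mul (by positivity)]
  congr 2
  unfold accept
  rw [add_neg_cancel_right, Real.exp_sub, Real.exp_sub, Real.exp_neg, Real.exp_neg]
  have := Real.exp_pos (H h)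
  have := Real.exp_pos (H (h + v))
  field_simp
  ring

/-- Probability that, in one coupled step with proposal `v`, the first (resp. second) field accepts
exactly when `p` (resp. `q`) is true; both fields use the same uniform variable.
The factor `1/2` is the probability of the proposal `v` (against `-v`). -/
def jumpW (H Ht : (ι → ℝ) → ℝ) (v : ι → ℝ) (p q : Bool) (ω : (ι → ℝ) × (ι → ℝ)) : ℝ :=
  match p, q with
  | true, true => min (accept H v ω.1) (accept Ht v ω.2) / 2
  | true, false => (accept H v ω.1 - min (accept H v ω.1) (accept Ht v ω.2)) / 2
  | false, true => (accept Ht v ω.2 - min (accept H v ω.1) (accept Ht v ω.2)) / 2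
  | false, false => (1 - max (accept H v ω.1) (accept Ht v ω.2)) / 2

lemma jumpW_nonneg (H Ht : (ι → ℝ) → ℝ) (v : ι → ℝ) (p q : Bool) (ω : (ι → ℝ) × (ι → ℝ)) :
    0 ≤ jumpW H Ht v p q ω := by
  have h1 := accept_nonneg H v ω.1
  have h2 := accept_nonneg Ht v ω.2
  have h3 := accept_le_one H v ω.1
  have h4 := accept_le_one Ht v ω.2
  have h5 := le_min h1 h2
  have h6 := max_le h3 h4
  have h7 := min_le_left (accept H v ω.1) (accept Ht v ω.2)
  have h8 := min_le_right (accept H v ω.1) (accept Ht v ω.2)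
  cases p <;> cases q <;> simp only [jumpW] <;> linarith

lemma measurable_jumpW {H Ht : (ι → ℝ) → ℝ} (hH : Measurable H) (hHt : Measurable Ht)
    (v : ι → ℝ) (p q : Bool) : Measurable (jumpW H Ht v p q) := by
  have h1 : Measurable fun ω : (ι → ℝ) × (ι → ℝ) => accept H v ω.1 :=
    (measurable_accept hH v).comp measurable_fst
  have h2 : Measurable fun ω : (ι → ℝ) × (ι → ℝ) => accept Ht v ω.2 :=
    (measurable_accept hHt v).comp measurable_snd
  cases p <;> cases q <;> unfold jumpW <;> dsimp only
  · exact ((measurable_const).sub (h1.max h2)).div_const 2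
  · exact (h2.sub (h1.min h2)).div_const 2
  · exact (h1.sub (h1.min h2)).div_const 2
  · exact (h1.min h2).div_const 2

/-- The displacement of the pair of fields on the event indexed by `p, q`. -/
def jumpMap (v : ι → ℝ) (p q : Bool) (ω : (ι → ℝ) × (ι → ℝ)) : (ι → ℝ) × (ι → ℝ) :=
  (ω.1 + (if p then v else 0), ω.2 + (if q then v else 0))

lemma measurable_jumpMap (v : ι → ℝ) (p q : Bool) : Measurable (jumpMap v p q) := by
  unfold jumpMap
  exact (measurable_fst.add_const _).prodMk (measurable_snd.add_const _)

/-- The piece of the perturbed coupling coming from proposal `v` and acceptance pattern `p, q`. -/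
def piece (μ : Measure ((ι → ℝ) × (ι → ℝ))) (H Ht : (ι → ℝ) → ℝ) (v : ι → ℝ) (p q : Bool) :
    Measure ((ι → ℝ) × (ι → ℝ)) :=
  (μ.withDensity fun ω => ENNReal.ofReal (jumpW H Ht v p q ω)).map (jumpMap v p q)

lemma lintegral_piece (μ : Measure ((ι → ℝ) × (ι → ℝ))) {H Ht : (ι → ℝ) → ℝ} (hH : Measurable H)
    (hHt : Measurable Ht) (v : ι → ℝ) (p q : Bool)
    {F : (ι → ℝ) × (ι → ℝ) → ℝ≥0∞} (hF : Measurable F) :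
    ∫⁻ ω, F ω ∂(piece μ H Ht v p q)
      = ∫⁻ ω, ENNReal.ofReal (jumpW H Ht v p q ω) * F (jumpMap v p q ω) ∂μ := by
  have h1 := measurable_jumpW hH hHt v p q
  have h2 := measurable_jumpMap v p q
  rw [piece, lintegral_map hF h2, lintegral_withDensity_eq_lintegral_mul _ (by fun_prop)
    (by fun_prop)]
  rfl

/-- One coupled Barker step for a pair of fields distributed according to `μ`, with proposals
`v` and `-v` equally likely. -/
def coupledStep (μ : Measure ((ι → ℝ) × (ι → ℝ))) (H Ht : (ι → ℝ) → ℝ) (v : ι → ℝ) :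
    Measure ((ι → ℝ) × (ι → ℝ)) :=
  ∑ j : Bool × Bool × Bool, piece μ H Ht (if j.1 then v else -v) j.2.1 j.2.2

lemma lintegral_coupledStep (μ : Measure ((ι → ℝ) × (ι → ℝ))) {H Ht : (ι → ℝ) → ℝ}
    (hH : Measurable H) (hHt : Measurable Ht) (v : ι → ℝ)
    {F : (ι → ℝ) × (ι → ℝ) → ℝ≥0∞} (hF : Measurable F) :
    ∫⁻ ω, F ω ∂(coupledStep μ H Ht v)
      = ∫⁻ ω, ∑ j : Bool × Bool × Bool,
          ENNReal.ofReal (jumpW H Ht (if j.1 then v else -v) j.2.1 j.2.2 ω)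
            * F (jumpMap (if j.1 then v else -v) j.2.1 j.2.2 ω) ∂μ := by
  rw [coupledStep, lintegral_finsetSum_measure, lintegral_finsetSum]
  · exact Finset.sum_congr rfl fun j _ => lintegral_piece μ hH hHt _ _ _ hF
  · intro j _
    have h1 := measurable_jumpW hH hHt (if j.1 then v else -v) j.2.1 j.2.2
    have h2 := measurable_jumpMap (ι := ι) (if j.1 then v else -v) j.2.1 j.2.2
    fun_prop

lemma ofReal_half_split {x a b : ℝ} (ha : 0 ≤ a) (hb : 0 ≤ b) (h : a + b = x / 2) :
    ENNReal.ofReal a + ENNReal.ofReal b = ENNReal.ofReal x / 2 := by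
  rw [← ENNReal.ofReal_add ha hb, h, ENNReal.ofReal_div_of_pos (by norm_num)]
  simp

/-- A single Barker step preserves `P ∝ exp (-H)`. -/
lemma step_invariant {H : (ι → ℝ) → ℝ} (hH : Measurable H) {P : Measure (ι → ℝ)} {c : ℝ≥0∞}
    (hP : P = c • (volume : Measure (ι → ℝ)).withDensity
      (fun h => ENNReal.ofReal (Real.exp (-(H h)))))
    (v : ι → ℝ) {f : (ι → ℝ) → ℝ≥0∞} (hf : Measurable f) :
    ∫⁻ h, (ENNReal.ofReal (accept H v h) / 2 * f (h + v)
        + ENNReal.ofReal (1 - accept H v h) / 2 * f h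
        + (ENNReal.ofReal (accept H (-v) h) / 2 * f (h + -v)
        + ENNReal.ofReal (1 - accept H (-v) h) / 2 * f h)) ∂P = ∫⁻ h, f h ∂P := by
  have h1 := measurable_accept hH v
  have h2 := measurable_accept hH (-v)
  have h3 : Measurable fun h => f (h + v) := hf.comp (measurable_add_const v)
  have h4 : Measurable fun h => f (h + -v) := hf.comp (measurable_add_const (-v))
  have key : ∀ w : ι → ℝ, ∫⁻ h, ENNReal.ofReal (accept H w h) / 2 * f (h + w) ∂P
      = ∫⁻ h, ENNReal.ofReal (accept H (-w) h) / 2 * f h ∂P := by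
    intro w
    have h5 := measurable_accept hH w
    have h6 := measurable_accept hH (-w)
    have h7 : Measurable fun h => f (h + w) := hf.comp (measurable_add_const w)
    have e : ∀ x y : ℝ≥0∞, x / 2 * y = 2⁻¹ * (x * y) := by
      intro x y; rw [div_eq_mul_inv]; ring
    simp only [e]
    rw [lintegral_const_mul _ (by fun_prop), lintegral_const_mul _ (by fun_prop),
      detailed_balance hH hP w hf]
  rw [lintegral_add_left (by fun_prop), lintegral_add_left (by fun_prop),
    lintegral_add_left (by fun_prop), key v, key (-v), neg_neg,
    ← lintegral_add_left (by fun_prop), ← lintegral_add_left (by fun_prop),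
    ← lintegral_add_left (by fun_prop)]
  refine lintegral_congr fun h => ?_
  have e : ∀ w : ι → ℝ, ENNReal.ofReal (accept H w h) + ENNReal.ofReal (1 - accept H w h) = 1 := by
    intro w
    rw [← ENNReal.ofReal_add (accept_nonneg _ _ _) (by linarith [accept_le_one H w h])]
    simp
  calc _ = ((ENNReal.ofReal (accept H v h) + ENNReal.ofReal (1 - accept H v h)) / 2
        + (ENNReal.ofReal (accept H (-v) h) + ENNReal.ofReal (1 - accept H (-v) h)) / 2) * f h := by
        simp only [div_eq_mul_inv]; ring
    _ = f h := by rw [e, e, ENNReal.add_halves, one_mul]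

lemma coupledStep_isCoupling {H Ht : (ι → ℝ) → ℝ} (hH : Measurable H) (hHt : Measurable Ht)
    {P Pt : Measure (ι → ℝ)} {c ct : ℝ≥0∞}
    (hP : P = c • (volume : Measure (ι → ℝ)).withDensity
      (fun h => ENNReal.ofReal (Real.exp (-(H h)))))
    (hPt : Pt = ct • (volume : Measure (ι → ℝ)).withDensity
      (fun h => ENNReal.ofReal (Real.exp (-(Ht h)))))
    {μ : Measure ((ι → ℝ) × (ι → ℝ))} (hμ : IsCoupling μ P Pt) (v : ι → ℝ) :
    IsCoupling (coupledStep μ H Ht v) P Pt := by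
  obtain ⟨hprob, h1, h2⟩ := hμ
  have hfst : (coupledStep μ H Ht v).map Prod.fst = P := by
    refine Measure.ext_of_lintegral _ fun f hf => ?_
    rw [lintegral_map hf measurable_fst,
      lintegral_coupledStep μ hH hHt v (F := fun ω => f ω.1) (hf.comp measurable_fst),
      ← step_invariant hH hP v hf]
    have m1 := measurable_accept hH v
    have m2 := measurable_accept hH (-v)
    have m3 : Measurable fun h => f (h + v) := hf.comp (measurable_add_const v)
    have m4 : Measurable fun h => f (h + -v) := hf.comp (measurable_add_const (-v))
    conv_rhs => rw [← h1, lintegral_map (by fun_prop) measurable_fst]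
    refine lintegral_congr fun ω => ?_
    have e1 : ∀ w : ι → ℝ, ENNReal.ofReal (accept H w ω.1) / 2
        = ENNReal.ofReal (jumpW H Ht w true true ω) + ENNReal.ofReal (jumpW H Ht w true false ω) :=
      fun w => (ofReal_half_split (jumpW_nonneg _ _ _ _ _ _) (jumpW_nonneg _ _ _ _ _ _)
        (by simp only [jumpW]; ring)).symm
    have e2 : ∀ w : ι → ℝ, ENNReal.ofReal (1 - accept H w ω.1) / 2
        = ENNReal.ofReal (jumpW H Ht w false true ω)
          + ENNReal.ofReal (jumpW H Ht w false false ω) :=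
      fun w => (ofReal_half_split (jumpW_nonneg _ _ _ _ _ _) (jumpW_nonneg _ _ _ _ _ _)
        (by simp only [jumpW]; linarith [min_add_max (accept H w ω.1) (accept Ht w ω.2)])).symm
    simp only [Fintype.sum_prod_type, Fintype.sum_bool, e1, e2, jumpMap, if_true, if_false,
      Bool.false_eq_true, add_zero]
    ring
  have hsnd : (coupledStep μ H Ht v).map Prod.snd = Pt := by
    refine Measure.ext_of_lintegral _ fun f hf => ?_
    rw [lintegral_map hf measurable_snd,
      lintegral_coupledStep μ hH hHt v (F := fun ω => f ω.2) (hf.comp measurable_snd),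
      ← step_invariant hHt hPt v hf]
    have m1 := measurable_accept hHt v
    have m2 := measurable_accept hHt (-v)
    have m3 : Measurable fun h => f (h + v) := hf.comp (measurable_add_const v)
    have m4 : Measurable fun h => f (h + -v) := hf.comp (measurable_add_const (-v))
    conv_rhs => rw [← h2, lintegral_map (by fun_prop) measurable_snd]
    refine lintegral_congr fun ω => ?_
    have e1 : ∀ w : ι → ℝ, ENNReal.ofReal (accept Ht w ω.2) / 2
        = ENNReal.ofReal (jumpW H Ht w true true ω) + ENNReal.ofReal (jumpW H Ht w false true ω) :=
      fun w => (ofReal_half_split (jumpW_nonneg _ _ _ _ _ _) (jumpW_nonneg _ _ _ _ _ _)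
        (by simp only [jumpW]; ring)).symm
    have e2 : ∀ w : ι → ℝ, ENNReal.ofReal (1 - accept Ht w ω.2) / 2
        = ENNReal.ofReal (jumpW H Ht w true false ω)
          + ENNReal.ofReal (jumpW H Ht w false false ω) :=
      fun w => (ofReal_half_split (jumpW_nonneg _ _ _ _ _ _) (jumpW_nonneg _ _ _ _ _ _)
        (by simp only [jumpW]; linarith [min_add_max (accept H w ω.1) (accept Ht w ω.2)])).symm
    simp only [Fintype.sum_prod_type, Fintype.sum_bool, e1, e2, jumpMap, if_true, if_false,
      Bool.false_eq_true, add_zero]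
    ring
  refine ⟨⟨?_⟩, hfst, hsnd⟩
  have hPprob : P Set.univ = 1 := by
    rw [← h1, Measure.map_apply measurable_fst MeasurableSet.univ]; simp
  rw [← hPprob, ← hfst, Measure.map_apply measurable_fst MeasurableSet.univ]; simp

/-- Second-order expansion of the Barker acceptance probability in the energy increment `d`. -/
lemma sigmoid_expansion (d : ℝ) : |1 / (1 + Real.exp d) - (1 / 2 - d / 4)| ≤ d ^ 2 := by
  have he := Real.exp_pos d
  rcases le_total |d| 1 with hd | hd
  · have h1 := Real.abs_exp_sub_one_sub_id_le hd
    obtain ⟨h2, h3⟩ := abs_le.mp h1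
    obtain ⟨h4, h5⟩ := abs_le.mp hd
    set r := Real.exp d - 1 - d with hr
    have h0 : Real.exp d = 1 + d + r := by rw [hr]; ring
    have hid : 1 / (1 + Real.exp d) - (1 / 2 - d / 4)
        = (d ^ 2 - 2 * r + d * r) / (4 * (1 + Real.exp d)) := by
      field_simp
      rw [h0]; ring
    rw [hid, abs_div, abs_of_pos (show 0 < 4 * (1 + Real.exp d) by positivity),
      div_le_iff₀ (by positivity)]
    have h6 : |d * r| ≤ d ^ 2 := by
      rw [abs_mul]; nlinarith [abs_nonneg d, abs_nonneg r]
    obtain ⟨h7, h8⟩ := abs_le.mp h6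
    have h9 : |d ^ 2 - 2 * r + d * r| ≤ 4 * d ^ 2 := by
      rw [abs_le]; constructor <;> nlinarith [sq_nonneg d]
    nlinarith [mul_nonneg (sq_nonneg d) he.le]
  · have h1 : 0 < 1 / (1 + Real.exp d) := by positivity
    have h2 : 1 / (1 + Real.exp d) < 1 := by
      rw [div_lt_one (by positivity)]; linarith
    have h3 : 1 ≤ d ^ 2 := by rw [← sq_abs]; nlinarith
    have h4 : |d| ≤ d ^ 2 := by rw [← sq_abs]; nlinarith
    obtain ⟨h5, h6⟩ := abs_le.mp h4
    rw [abs_le]; constructor <;> linarith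

set_option maxHeartbeats 1000000 in
/-- Expansion of the acceptance probabilities in one coupled step of size `ξ`. Here `G`, `Gt` are
the derivatives of the two energies and `d`, `dt` their increments. -/
lemma step_bound {ξ G Gt B W K t d dt : ℝ} (hξ : |ξ| ≤ 1) (hd : |d - ξ * G| ≤ B * ξ ^ 2)
    (hdt : |dt - ξ * Gt| ≤ B * ξ ^ 2) (hB : 0 ≤ B) (hK : 0 ≤ K) (hW : 1 ≤ W)
    (hG : |G| ≤ B * W) (hGt : |Gt| ≤ B * W) (ht : |t| ≤ K * W) :
    (1 / (1 + Real.exp d) - 1 / (1 + Real.exp dt)) * (ξ * t)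
        + |1 / (1 + Real.exp d) - 1 / (1 + Real.exp dt)| * (K * ξ ^ 2)
      ≤ -(ξ ^ 2 / 4) * (t * (G - Gt)) + |ξ| ^ 3 * (K * (3 * B + 16 * B ^ 2) * W ^ 3) := by
  have hs := sigmoid_expansion d
  have hst := sigmoid_expansion dt
  set s := 1 / (1 + Real.exp d)
  set st := 1 / (1 + Real.exp dt)
  set x := |ξ| with hx
  have hx0 : 0 ≤ x := abs_nonneg ξ
  have hx2 : ξ ^ 2 = x ^ 2 := (sq_abs ξ).symm
  have hxx : x ^ 2 ≤ x := by nlinarith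
  have size : ∀ {d G : ℝ}, |d - ξ * G| ≤ B * ξ ^ 2 → |G| ≤ B * W → d ^ 2 ≤ 4 * B ^ 2 * W ^ 2 * x ^ 2 := by
    intro d G h1 h2
    have h3 : |d| ≤ 2 * B * W * x := by
      calc |d| = |(d - ξ * G) + ξ * G| := by ring_nf
        _ ≤ |d - ξ * G| + |ξ * G| := abs_add_le _ _
        _ ≤ B * x ^ 2 + x * (B * W) := by
            rw [abs_mul, ← hx2]
            exact add_le_add h1 (mul_le_mul_of_nonneg_left h2 hx0)
        _ ≤ B * W * x + x * (B * W) := by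
            have : x ^ 2 ≤ W * x := by nlinarith
            nlinarith
        _ = 2 * B * W * x := by ring
    calc d ^ 2 = |d| ^ 2 := (sq_abs d).symm
      _ ≤ (2 * B * W * x) ^ 2 := pow_le_pow_left₀ (abs_nonneg _) h3 2
      _ = _ := by ring
  have hd2 := size hd hG
  have hdt2 := size hdt hGt
  have hW2 : 1 ≤ W ^ 2 := by nlinarith
  set E := s - st + ξ * (G - Gt) / 4 with hE
  have hEb : |E| ≤ x ^ 2 * W ^ 2 * (B + 8 * B ^ 2) := by
    have h1 : |E| ≤ B * x ^ 2 / 2 + d ^ 2 + dt ^ 2 := by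
      rw [hx2] at hd hdt
      rw [abs_le] at *
      constructor <;> rw [hE] <;> linarith [hd.1, hd.2, hdt.1, hdt.2, hs.1, hs.2, hst.1, hst.2]
    have h2 : B * x ^ 2 / 2 ≤ x ^ 2 * W ^ 2 * B := by
      have : 0 ≤ B * x ^ 2 := by positivity
      nlinarith
    linarith
  have hdiff : |s - st| ≤ x * W ^ 2 * (2 * B + 8 * B ^ 2) := by
    have h1 : s - st = E - ξ * (G - Gt) / 4 := by rw [hE]; ring
    have h2 : |ξ * (G - Gt) / 4| ≤ x * (B * W) / 2 := by
      rw [abs_div, abs_mul, abs_of_pos (show (0 : ℝ) < 4 by norm_num)]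
      have : |G - Gt| ≤ 2 * (B * W) := (abs_sub _ _).trans (by linarith)
      nlinarith [mul_le_mul_of_nonneg_left this hx0]
    have h3 : x * (B * W) / 2 ≤ x * W ^ 2 * B := by
      have : W ≤ W ^ 2 := by nlinarith
      have h5 : 0 ≤ x * B := by positivity
      nlinarith
    have h4 : x ^ 2 * W ^ 2 * (B + 8 * B ^ 2) ≤ x * W ^ 2 * (B + 8 * B ^ 2) := by gcongr
    calc |s - st| ≤ |E| + |ξ * (G - Gt) / 4| := by rw [h1]; exact abs_sub _ _
      _ ≤ x ^ 2 * W ^ 2 * (B + 8 * B ^ 2) + x * (B * W) / 2 := add_le_add hEb h2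
      _ ≤ _ := by linarith
  have hEt : E * (ξ * t) ≤ x ^ 3 * (K * (B + 8 * B ^ 2) * W ^ 3) := by
    calc E * (ξ * t) ≤ |E * (ξ * t)| := le_abs_self _
      _ = |E| * (x * |t|) := by rw [abs_mul, abs_mul]
      _ ≤ (x ^ 2 * W ^ 2 * (B + 8 * B ^ 2)) * (x * (K * W)) := by gcongr
      _ = _ := by ring
  have hlast : |s - st| * (K * ξ ^ 2) ≤ x ^ 3 * (K * (2 * B + 8 * B ^ 2) * W ^ 3) := by
    calc |s - st| * (K * ξ ^ 2) ≤ (x * W ^ 2 * (2 * B + 8 * B ^ 2)) * (K * ξ ^ 2) := by gcongr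
      _ = (x ^ 3 * (K * (2 * B + 8 * B ^ 2))) * W ^ 2 := by rw [hx2]; ring
      _ ≤ (x ^ 3 * (K * (2 * B + 8 * B ^ 2))) * W ^ 3 := by
          gcongr
          · norm_num
      _ = _ := by ring
  have hsplit : (s - st) * (ξ * t) = E * (ξ * t) - ξ ^ 2 / 4 * (t * (G - Gt)) := by
    rw [hE]; ring
  rw [hsplit]
  linarith

/-- The polynomial weight `1 + ∑ |h i|`, controlling all observables below. -/
def wt (h : ι → ℝ) : ℝ := 1 + ∑ i, |h i|

lemma one_le_wt (h : ι → ℝ) : 1 ≤ wt h := by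
  unfold wt; linarith [Finset.sum_nonneg fun i (_ : i ∈ Finset.univ) => abs_nonneg (h i)]

lemma abs_le_wt (h : ι → ℝ) (i : ι) : |h i| ≤ wt h := by
  unfold wt
  linarith [Finset.single_le_sum (f := fun i => |h i|) (fun i _ => abs_nonneg (h i))
    (Finset.mem_univ i)]

lemma measurable_wt : Measurable (wt : (ι → ℝ) → ℝ) := by
  unfold wt; fun_prop

/-- The joint weight of a pair of fields. -/
def wt2 (ω : (ι → ℝ) × (ι → ℝ)) : ℝ := wt ω.1 + wt ω.2

lemma measurable_wt2 : Measurable (wt2 : (ι → ℝ) × (ι → ℝ) → ℝ) :=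
  (measurable_wt.comp measurable_fst).add (measurable_wt.comp measurable_snd)

lemma one_le_wt2 (ω : (ι → ℝ) × (ι → ℝ)) : 1 ≤ wt2 ω := by
  unfold wt2; linarith [one_le_wt ω.1, one_le_wt ω.2]

lemma integrable_wt2 {P Pt : Measure (ι → ℝ)} (hm : Integrable (fun h => wt h ^ 3) P)
    (hmt : Integrable (fun h => wt h ^ 3) Pt) {μ : Measure ((ι → ℝ) × (ι → ℝ))}
    (hμ : IsCoupling μ P Pt) :
    Integrable (fun ω => wt2 ω ^ 3) μ ∧
      ∫ ω, wt2 ω ^ 3 ∂μ ≤ 4 * (∫ h, wt h ^ 3 ∂P + ∫ h, wt h ^ 3 ∂Pt) := by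
  obtain ⟨hprob, h1, h2⟩ := hμ
  have mw := measurable_wt (ι := ι)
  have i1 : Integrable (fun ω : (ι → ℝ) × (ι → ℝ) => wt ω.1 ^ 3) μ := by
    rw [← h1] at hm; exact hm.comp_measurable measurable_fst
  have i2 : Integrable (fun ω : (ι → ℝ) × (ι → ℝ) => wt ω.2 ^ 3) μ := by
    rw [← h2] at hmt; exact hmt.comp_measurable measurable_snd
  have e1 : ∫ h, wt h ^ 3 ∂P = ∫ ω, wt ω.1 ^ 3 ∂μ := by
    rw [← h1, integral_map measurable_fst.aemeasurable (by fun_prop)]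
  have e2 : ∫ h, wt h ^ 3 ∂Pt = ∫ ω, wt ω.2 ^ 3 ∂μ := by
    rw [← h2, integral_map measurable_snd.aemeasurable (by fun_prop)]
  have hle : ∀ ω : (ι → ℝ) × (ι → ℝ), wt2 ω ^ 3 ≤ 4 * (wt ω.1 ^ 3 + wt ω.2 ^ 3) := by
    intro ω
    have a := one_le_wt ω.1
    have b := one_le_wt ω.2
    unfold wt2
    nlinarith [mul_nonneg (show 0 ≤ wt ω.1 + wt ω.2 by linarith) (sq_nonneg (wt ω.1 - wt ω.2))]
  have i3 : Integrable (fun ω : (ι → ℝ) × (ι → ℝ) => 4 * (wt ω.1 ^ 3 + wt ω.2 ^ 3)) μ :=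
    (i1.add i2).const_mul 4
  have i4 : Integrable (fun ω => wt2 ω ^ 3) μ := by
    refine i3.mono' ((measurable_wt2.pow_const 3).aestronglyMeasurable) (ae_of_all _ fun ω => ?_)
    have := one_le_wt2 ω
    rw [Real.norm_of_nonneg (by positivity)]
    exact hle ω
  refine ⟨i4, ?_⟩
  calc ∫ ω, wt2 ω ^ 3 ∂μ ≤ ∫ ω, 4 * (wt ω.1 ^ 3 + wt ω.2 ^ 3) ∂μ := integral_mono i4 i3 hle
    _ = _ := by rw [integral_const_mul, integral_add i1 i2, e1, e2]

lemma integrable_of_le_wt2 {P Pt : Measure (ι → ℝ)} (hm : Integrable (fun h => wt h ^ 3) P)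
    (hmt : Integrable (fun h => wt h ^ 3) Pt) {μ : Measure ((ι → ℝ) × (ι → ℝ))}
    (hμ : IsCoupling μ P Pt) {f : (ι → ℝ) × (ι → ℝ) → ℝ} (hf : Measurable f) (C : ℝ)
    (hC : ∀ ω, |f ω| ≤ C * wt2 ω ^ 3) : Integrable f μ :=
  ((integrable_wt2 hm hmt hμ).1.const_mul C).mono' hf.aestronglyMeasurable
    (ae_of_all _ fun ω => by rw [Real.norm_eq_abs]; exact hC ω)

/-- The transport cost `∑ θ_i (h_i - h̃_i)`. -/
def cost (θ : ι → ℝ → ℝ) (ω : (ι → ℝ) × (ι → ℝ)) : ℝ := ∑ i, θ i (ω.1 i - ω.2 i)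

lemma cost_shift [DecidableEq ι] (θ : ι → ℝ → ℝ) (i : ι) (ξ : ℝ) (p q : Bool)
    (ω : (ι → ℝ) × (ι → ℝ)) :
    cost θ (jumpMap (Pi.single i ξ) p q ω) = cost θ ω
      + (θ i (ω.1 i - ω.2 i + ((if p then ξ else 0) - (if q then ξ else 0)))
        - θ i (ω.1 i - ω.2 i)) := by
  have key : cost θ (jumpMap (Pi.single i ξ) p q ω) - cost θ ω
      = θ i (ω.1 i - ω.2 i + ((if p then ξ else 0) - (if q then ξ else 0)))
        - θ i (ω.1 i - ω.2 i) := by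
    unfold cost
    rw [← Finset.sum_sub_distrib, Finset.sum_eq_single i]
    · congr 2
      unfold jumpMap
      cases p <;> cases q <;> simp <;> ring
    · intro j _ hj
      unfold jumpMap
      cases p <;> cases q <;> simp [Pi.single_eq_of_ne hj]
    · intro h; exact absurd (Finset.mem_univ i) h
  linarith

/-- Change of the cost in one coupled step at site `i`: simultaneous acceptance leaves the
difference unchanged, so only the discrepancy of the acceptance probabilities contributes. -/
lemma cost_step_le [DecidableEq ι] {H Ht : (ι → ℝ) → ℝ} {θ θ' : ι → ℝ → ℝ} {K : ℝ}
    (hθ : ∀ i s ξ, θ i (s + ξ) ≤ θ i s + ξ * θ' i s + K * ξ ^ 2) (i : ι) (τ : ℝ)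
    (ω : (ι → ℝ) × (ι → ℝ)) (b : Bool) :
    ∑ k : Bool × Bool, jumpW H Ht (if b then Pi.single i τ else -Pi.single i τ) k.1 k.2 ω
        * cost θ (jumpMap (if b then Pi.single i τ else -Pi.single i τ) k.1 k.2 ω)
      ≤ cost θ ω / 2 + ((accept H (Pi.single i (if b then τ else -τ)) ω.1
            - accept Ht (Pi.single i (if b then τ else -τ)) ω.2)
              * ((if b then τ else -τ) * θ' i (ω.1 i - ω.2 i))
          + |accept H (Pi.single i (if b then τ else -τ)) ω.1
            - accept Ht (Pi.single i (if b then τ else -τ)) ω.2|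
              * (K * (if b then τ else -τ) ^ 2)) / 2 := by
  have hv : (if b then Pi.single i τ else -Pi.single i τ : ι → ℝ)
      = Pi.single i (if b then τ else -τ) := by
    cases b <;> simp [Pi.single_neg]
  rw [hv]
  set ξ : ℝ := if b then τ else -τ
  simp only [cost_shift, Fintype.sum_prod_type, Fintype.sum_bool, if_true, if_false,
    Bool.false_eq_true, jumpW]
  set a := accept H (Pi.single i ξ) ω.1
  set a' := accept Ht (Pi.single i ξ) ω.2
  set s := ω.1 i - ω.2 i
  have h1 := hθ i s ξ
  have h2 := hθ i s (-ξ)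
  have h3 : s + (ξ - 0) = s + ξ := by ring
  have h4 : s + (0 - ξ) = s + -ξ := by ring
  have h5 : s + (ξ - ξ) = s := by ring
  have h6 : s + (0 - 0) = s := by ring
  rw [h3, h4, h5, h6]
  rcases le_total a a' with h | h
  · rw [min_eq_left h, max_eq_right h, abs_of_nonpos (by linarith)]
    nlinarith [mul_le_mul_of_nonneg_left h2 (sub_nonneg.mpr h)]
  · rw [min_eq_right h, max_eq_left h, abs_of_nonneg (by linarith)]
    nlinarith [mul_le_mul_of_nonneg_left h1 (sub_nonneg.mpr h)]

/-- A coupling almost minimizing the cost `∑ θ_i (h_i - h̃_i)` is almost stationary under the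
synchronously coupled gradient dynamics: the drift of the cost is almost nonnegative. -/
theorem exists_stationary_coupling [DecidableEq ι] {H Ht : (ι → ℝ) → ℝ} (hH : Measurable H)
    (hHt : Measurable Ht) {P Pt : Measure (ι → ℝ)} [IsProbabilityMeasure P]
    [IsProbabilityMeasure Pt] {c ct : ℝ≥0∞}
    (hP : P = c • (volume : Measure (ι → ℝ)).withDensity
      (fun h => ENNReal.ofReal (Real.exp (-(H h)))))
    (hPt : Pt = ct • (volume : Measure (ι → ℝ)).withDensity
      (fun h => ENNReal.ofReal (Real.exp (-(Ht h)))))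
    {G Gt : ι → (ι → ℝ) → ℝ} (mG : ∀ i, Measurable (G i)) (mGt : ∀ i, Measurable (Gt i))
    {B : ℝ} (hB : 0 ≤ B)
    (hG : ∀ i h ξ, |H (h + Pi.single i ξ) - H h - ξ * G i h| ≤ B * ξ ^ 2)
    (hGt : ∀ i h ξ, |Ht (h + Pi.single i ξ) - Ht h - ξ * Gt i h| ≤ B * ξ ^ 2)
    (bG : ∀ i h, |G i h| ≤ B * wt h) (bGt : ∀ i h, |Gt i h| ≤ B * wt h)
    (hm : Integrable (fun h => wt h ^ 3) P) (hmt : Integrable (fun h => wt h ^ 3) Pt)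
    {θ θ' : ι → ℝ → ℝ} {K : ℝ} (hK : 0 ≤ K)
    (mθ : ∀ i, Measurable (θ i)) (mθ' : ∀ i, Measurable (θ' i))
    (θ0 : ∀ i s, 0 ≤ θ i s) (θK : ∀ i s, θ i s ≤ K * s ^ 2) (θ'K : ∀ i s, |θ' i s| ≤ K * |s|)
    (hθ : ∀ i s ξ, θ i (s + ξ) ≤ θ i s + ξ * θ' i s + K * ξ ^ 2)
    {ρ : ℝ} (hρ : 0 < ρ) :
    ∃ μ, IsCoupling μ P Pt ∧
      (∀ i, Integrable (fun ω => θ' i (ω.1 i - ω.2 i) * (G i ω.1 - Gt i ω.2)) μ) ∧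
      ∑ i, ∫ ω, θ' i (ω.1 i - ω.2 i) * (G i ω.1 - Gt i ω.2) ∂μ ≤ ρ := by
  set Q := 4 * (∫ h, wt h ^ 3 ∂P + ∫ h, wt h ^ 3 ∂Pt) with hQ
  set C := K * (3 * B + 16 * B ^ 2) with hC
  have hC0 : 0 ≤ C := by positivity
  have hQ0 : 0 ≤ Q := by
    have h1 : ∀ ν : Measure (ι → ℝ), 0 ≤ ∫ h, wt h ^ 3 ∂ν := fun ν =>
      integral_nonneg fun h => by have := one_le_wt h; positivity
    have := h1 P; have := h1 Pt; positivity
  have mcost : Measurable (cost θ) := by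
    unfold cost
    refine Finset.measurable_sum _ fun i _ => (mθ i).comp ?_
    fun_prop
  have cost0 : ∀ ω, 0 ≤ cost θ ω := fun ω => Finset.sum_nonneg fun i _ => θ0 _ _
  have hdiff : ∀ (ω : (ι → ℝ) × (ι → ℝ)) i, |ω.1 i - ω.2 i| ≤ wt2 ω := fun ω i =>
    (abs_sub _ _).trans (add_le_add (abs_le_wt _ _) (abs_le_wt _ _))
  have wpow : ∀ (ω : (ι → ℝ) × (ι → ℝ)), wt2 ω ^ 2 ≤ wt2 ω ^ 3 := fun ω =>
    pow_le_pow_right₀ (one_le_wt2 ω) (by norm_num)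
  have costle : ∀ ω, |cost θ ω| ≤ (Fintype.card ι * K) * wt2 ω ^ 3 := by
    intro ω
    rw [abs_of_nonneg (cost0 ω)]
    calc cost θ ω ≤ ∑ i : ι, K * wt2 ω ^ 3 := by
          refine Finset.sum_le_sum fun i _ => (θK _ _).trans ?_
          refine mul_le_mul_of_nonneg_left (le_trans ?_ (wpow ω)) hK
          rw [← sq_abs]
          exact pow_le_pow_left₀ (abs_nonneg _) (hdiff ω i) 2
      _ = _ := by simp; ring
  have icost : ∀ {μ}, IsCoupling μ P Pt → Integrable (cost θ) μ := fun hμ =>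
    integrable_of_le_wt2 hm hmt hμ mcost _ costle
  have hwt : ∀ ω : (ι → ℝ) × (ι → ℝ), wt ω.1 ≤ wt2 ω ∧ wt ω.2 ≤ wt2 ω := by
    intro ω
    have := one_le_wt ω.1; have := one_le_wt ω.2
    unfold wt2; constructor <;> linarith
  have bG2 : ∀ i (ω : (ι → ℝ) × (ι → ℝ)), |G i ω.1| ≤ B * wt2 ω := fun i ω =>
    (bG i ω.1).trans (mul_le_mul_of_nonneg_left (hwt ω).1 hB)
  have bGt2 : ∀ i (ω : (ι → ℝ) × (ι → ℝ)), |Gt i ω.2| ≤ B * wt2 ω := fun i ω =>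
    (bGt i ω.2).trans (mul_le_mul_of_nonneg_left (hwt ω).2 hB)
  have bθ : ∀ i (ω : (ι → ℝ) × (ι → ℝ)), |θ' i (ω.1 i - ω.2 i)| ≤ K * wt2 ω := fun i ω =>
    (θ'K _ _).trans (mul_le_mul_of_nonneg_left (hdiff ω i) hK)
  have mZ : ∀ i, Measurable fun ω : (ι → ℝ) × (ι → ℝ) =>
      θ' i (ω.1 i - ω.2 i) * (G i ω.1 - Gt i ω.2) := by
    intro i
    have h1 : Measurable fun ω : (ι → ℝ) × (ι → ℝ) => θ' i (ω.1 i - ω.2 i) :=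
      (mθ' i).comp (by fun_prop)
    exact h1.mul (((mG i).comp measurable_fst).sub ((mGt i).comp measurable_snd))
  have iZ : ∀ {μ}, IsCoupling μ P Pt → ∀ i, Integrable (fun ω : (ι → ℝ) × (ι → ℝ) =>
      θ' i (ω.1 i - ω.2 i) * (G i ω.1 - Gt i ω.2)) μ := by
    intro μ hμ i
    refine integrable_of_le_wt2 hm hmt hμ (mZ i) (K * (2 * B)) fun ω => ?_
    have h1 : |G i ω.1 - Gt i ω.2| ≤ 2 * (B * wt2 ω) :=
      (abs_sub _ _).trans (by linarith [bG2 i ω, bGt2 i ω])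
    have := one_le_wt2 ω
    calc |θ' i (ω.1 i - ω.2 i) * (G i ω.1 - Gt i ω.2)|
        ≤ (K * wt2 ω) * (2 * (B * wt2 ω)) := by
          rw [abs_mul]
          exact mul_le_mul (bθ i ω) h1 (abs_nonneg _) (by positivity)
      _ = (K * (2 * B)) * wt2 ω ^ 2 := by ring
      _ ≤ _ := mul_le_mul_of_nonneg_left (wpow ω) (by positivity)
  -- The step size and the admissible deficit `τ ^ 3` from the optimal cost.
  obtain ⟨τ, hτ0, hτ1, hτρ⟩ : ∃ τ : ℝ, 0 < τ ∧ τ ≤ 1 ∧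
      Fintype.card ι * (4 * τ * (1 + C * Q)) ≤ ρ := by
    set A := (Fintype.card ι : ℝ) * (4 * (1 + C * Q)) with hA
    have hA0 : 0 ≤ A := by positivity
    refine ⟨min 1 (ρ / (A + 1)), by positivity, min_le_left _ _, ?_⟩
    calc _ = min 1 (ρ / (A + 1)) * A := by rw [hA]; ring
      _ ≤ ρ / (A + 1) * A := by gcongr; exact min_le_right _ _
      _ ≤ ρ := by rw [div_mul_eq_mul_div, div_le_iff₀ (by positivity)]; nlinarith
  set S : Set ℝ := {r | ∃ μ, IsCoupling μ P Pt ∧ ∫ ω, cost θ ω ∂μ = r} with hS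
  have hSne : S.Nonempty := by
    refine ⟨_, P.prod Pt, ⟨inferInstance, ?_, ?_⟩, rfl⟩
    · simp
    · simp
  have hSb : BddBelow S := ⟨0, by
    rintro r ⟨μ, -, rfl⟩
    exact integral_nonneg cost0⟩
  obtain ⟨r, ⟨μ, hμ, rfl⟩, hr⟩ := exists_lt_of_csInf_lt hSne
    (show sInf S < sInf S + τ ^ 3 by linarith [pow_pos hτ0 3])
  refine ⟨μ, hμ, iZ hμ, ?_⟩
  have site : ∀ i, ∫ ω, θ' i (ω.1 i - ω.2 i) * (G i ω.1 - Gt i ω.2) ∂μ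
      ≤ 4 * τ * (1 + C * Q) := by
    intro i
    have hμ' := coupledStep_isCoupling hH hHt hP hPt hμ (Pi.single i τ)
    set μ' := coupledStep μ H Ht (Pi.single i τ) with hμ'def
    have hge : sInf S ≤ ∫ ω, cost θ ω ∂μ' := csInf_le hSb ⟨μ', hμ', rfl⟩
    set F : (ι → ℝ) × (ι → ℝ) → ℝ := fun ω => ∑ j : Bool × Bool × Bool,
      jumpW H Ht (if j.1 then Pi.single i τ else -Pi.single i τ) j.2.1 j.2.2 ω
        * cost θ (jumpMap (if j.1 then Pi.single i τ else -Pi.single i τ) j.2.1 j.2.2 ω) with hF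
    have F0 : ∀ ω, 0 ≤ F ω := fun ω =>
      Finset.sum_nonneg fun j _ => mul_nonneg (jumpW_nonneg _ _ _ _ _ _) (cost0 _)
    have mF : Measurable F := by
      refine Finset.measurable_sum _ fun j _ => ?_
      exact (measurable_jumpW hH hHt _ _ _).mul (mcost.comp (measurable_jumpMap _ _ _))
    have heq : ∫ ω, cost θ ω ∂μ' = ∫ ω, F ω ∂μ := by
      rw [integral_eq_lintegral_of_nonneg_ae (ae_of_all _ cost0) mcost.aestronglyMeasurable,
        integral_eq_lintegral_of_nonneg_ae (ae_of_all _ F0) mF.aestronglyMeasurable, hμ'def,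
        lintegral_coupledStep μ hH hHt _ mcost.ennreal_ofReal]
      congr 1
      refine lintegral_congr fun ω => ?_
      rw [hF, ENNReal.ofReal_sum_of_nonneg
        fun j _ => mul_nonneg (jumpW_nonneg _ _ _ _ _ _) (cost0 _)]
      exact Finset.sum_congr rfl fun j _ => (ENNReal.ofReal_mul (jumpW_nonneg _ _ _ _ _ _)).symm
    have hpt : ∀ ω, F ω ≤ cost θ ω
        + (-(τ ^ 2 / 4) * (θ' i (ω.1 i - ω.2 i) * (G i ω.1 - Gt i ω.2))
          + τ ^ 3 * C * wt2 ω ^ 3) := by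
      intro ω
      have hb : ∀ b : Bool, _ := cost_step_le (H := H) (Ht := Ht) hθ i τ ω
      have hb1 := hb true
      have hb2 := hb false
      simp only [if_true, if_false, Bool.false_eq_true] at hb1 hb2
      have st : ∀ ξ : ℝ, |ξ| = τ →
          (accept H (Pi.single i ξ) ω.1 - accept Ht (Pi.single i ξ) ω.2)
              * (ξ * θ' i (ω.1 i - ω.2 i))
            + |accept H (Pi.single i ξ) ω.1 - accept Ht (Pi.single i ξ) ω.2| * (K * ξ ^ 2)
          ≤ -(τ ^ 2 / 4) * (θ' i (ω.1 i - ω.2 i) * (G i ω.1 - Gt i ω.2))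
            + τ ^ 3 * (C * wt2 ω ^ 3) := by
        intro ξ hξ
        have := step_bound (ξ := ξ) (by rw [hξ]; exact hτ1) (hG i ω.1 ξ) (hGt i ω.2 ξ) hB hK
          (one_le_wt2 ω) (bG2 i ω) (bGt2 i ω) (bθ i ω)
        have e : ξ ^ 2 = τ ^ 2 := by rw [← hξ, sq_abs]
        rw [hξ] at this
        rw [e] at this ⊢
        exact this
      have s1 := st τ (abs_of_pos hτ0)
      have s2 := st (-τ) (by rw [abs_neg, abs_of_pos hτ0])
      have hFs : F ω = ∑ b : Bool, ∑ k : Bool × Bool,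
          jumpW H Ht (if b then Pi.single i τ else -Pi.single i τ) k.1 k.2 ω
            * cost θ (jumpMap (if b then Pi.single i τ else -Pi.single i τ) k.1 k.2 ω) := by
        rw [hF]; exact Fintype.sum_prod_type _
      rw [hFs, Fintype.sum_bool]
      simp only [if_true, if_false, Bool.false_eq_true]
      linarith
    obtain ⟨iw, hw⟩ := integrable_wt2 hm hmt hμ
    have i1 := ((iZ hμ i).const_mul (-(τ ^ 2 / 4)))
    have i2 := iw.const_mul (τ ^ 3 * C)
    have i12 : Integrable (fun ω : (ι → ℝ) × (ι → ℝ) =>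
        -(τ ^ 2 / 4) * (θ' i (ω.1 i - ω.2 i) * (G i ω.1 - Gt i ω.2))
          + τ ^ 3 * C * wt2 ω ^ 3) μ := i1.add i2
    have hint : ∫ ω, F ω ∂μ ≤ ∫ ω, cost θ ω ∂μ
        + (-(τ ^ 2 / 4) * ∫ ω, θ' i (ω.1 i - ω.2 i) * (G i ω.1 - Gt i ω.2) ∂μ
          + τ ^ 3 * C * ∫ ω, wt2 ω ^ 3 ∂μ) := by
      rw [← integral_const_mul, ← integral_const_mul, ← integral_add i1 i2,
        ← integral_add (icost hμ) i12]
      exact integral_mono_of_nonneg (ae_of_all _ F0) ((icost hμ).add i12)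
        (ae_of_all _ hpt)
    have h5 : τ ^ 3 * C * ∫ ω, wt2 ω ^ 3 ∂μ ≤ τ ^ 3 * C * Q := by gcongr
    set Z := ∫ ω, θ' i (ω.1 i - ω.2 i) * (G i ω.1 - Gt i ω.2) ∂μ
    have h6 : τ ^ 2 * Z ≤ τ ^ 2 * (4 * τ * (1 + C * Q)) := by nlinarith
    exact le_of_mul_le_mul_left h6 (by positivity)
  calc _ ≤ ∑ i : ι, 4 * τ * (1 + C * Q) := Finset.sum_le_sum fun i _ => site i
    _ = Fintype.card ι * (4 * τ * (1 + C * Q)) := by simp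
    _ ≤ ρ := hτρ

end Transport

/-! ### The potential -/

section Potential

variable {V : ℝ → ℝ} {aV AV : ℝ}

/-- Mean value theorem for `V'`: a difference of forces is an elliptic coefficient times the
difference of gradients. -/
lemma deriv_V_slope (hC2 : ContDiff ℝ 2 V) (hlb : ∀ x, aV ≤ deriv (deriv V) x)
    (hub : ∀ x, deriv (deriv V) x ≤ AV) (s t : ℝ) :
    ∃ k, aV ≤ k ∧ k ≤ AV ∧ deriv V s - deriv V t = k * (s - t) := by
  have hd : Differentiable ℝ (deriv V) := (hC2.deriv' (n := 1)).differentiable (by norm_num)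
  have main : ∀ p q : ℝ, p < q → ∃ k, aV ≤ k ∧ k ≤ AV ∧ deriv V q - deriv V p = k * (q - p) := by
    intro p q hpq
    obtain ⟨c, -, hc⟩ := exists_deriv_eq_slope (deriv V) hpq hd.continuous.continuousOn
      hd.differentiableOn
    refine ⟨_, hlb c, hub c, ?_⟩
    rw [hc, div_mul_cancel₀ _ (by linarith)]
  rcases lt_trichotomy s t with h | h | h
  · obtain ⟨k, h1, h2, h3⟩ := main s t h
    exact ⟨k, h1, h2, by linarith⟩
  · exact ⟨aV, le_rfl, (hlb 0).trans (hub 0), by rw [h]; ring⟩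
  · exact main t s h

lemma V_taylor (hC2 : ContDiff ℝ 2 V) (haV : 0 < aV) (hlb : ∀ x, aV ≤ deriv (deriv V) x)
    (hub : ∀ x, deriv (deriv V) x ≤ AV) (s ξ : ℝ) :
    |V (s + ξ) - V s - ξ * deriv V s| ≤ AV * ξ ^ 2 := by
  have hd : Differentiable ℝ V := hC2.differentiable (by norm_num)
  have main : ∀ p q x : ℝ, p < q → p ≤ x → x ≤ q →
      |V q - V p - (q - p) * deriv V x| ≤ AV * (q - p) ^ 2 := by
    intro p q x hpq hx1 hx2
    obtain ⟨c, hc, hc'⟩ := exists_deriv_eq_slope V hpq hd.continuous.continuousOn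
      hd.differentiableOn
    obtain ⟨k, hk1, hk2, hk⟩ := deriv_V_slope hC2 hlb hub c x
    have e : V q - V p = (q - p) * deriv V c := by
      rw [hc', mul_div_cancel₀ _ (by linarith)]
    have e2 : V q - V p - (q - p) * deriv V x = k * ((q - p) * (c - x)) := by
      rw [e, ← mul_sub, hk]; ring
    have h1 : |c - x| ≤ q - p := by rw [abs_le]; constructor <;> linarith [hc.1, hc.2]
    rw [e2, abs_mul, abs_mul, abs_of_pos (show 0 < k by linarith),
      abs_of_pos (show 0 < q - p by linarith)]
    have h2 : (q - p) * |c - x| ≤ (q - p) ^ 2 := by nlinarith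
    exact mul_le_mul hk2 h2 (by have := abs_nonneg (c - x); nlinarith) (by linarith)
  rcases lt_trichotomy ξ 0 with h | h | h
  · have := main (s + ξ) s s (by linarith) (by linarith) le_rfl
    rw [← abs_neg] at this
    convert this using 2 <;> ring
  · simp [h]
  · have := main s (s + ξ) s (by linarith) le_rfl (by linarith)
    convert this using 2 <;> ring_nf

lemma deriv_V_zero (hsym : ∀ x, V (-x) = V x) : deriv V 0 = 0 := by
  have h1 : (fun x => V (-x)) = V := funext hsym
  have h2 := deriv_comp_neg V 0
  rw [h1, neg_zero] at h2
  linarith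

lemma abs_deriv_V_le (hC2 : ContDiff ℝ 2 V) (hsym : ∀ x, V (-x) = V x) (haV : 0 < aV)
    (hlb : ∀ x, aV ≤ deriv (deriv V) x) (hub : ∀ x, deriv (deriv V) x ≤ AV) (s : ℝ) :
    |deriv V s| ≤ AV * |s| := by
  obtain ⟨k, hk1, hk2, hk⟩ := deriv_V_slope hC2 hlb hub s 0
  rw [deriv_V_zero hsym, sub_zero, sub_zero] at hk
  rw [hk, abs_mul, abs_of_pos (show 0 < k by linarith)]
  exact mul_le_mul_of_nonneg_right hk2 (abs_nonneg s)

lemma V_lower (hC2 : ContDiff ℝ 2 V) (hsym : ∀ x, V (-x) = V x)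
    (hlb : ∀ x, aV ≤ deriv (deriv V) x) (hub : ∀ x, deriv (deriv V) x ≤ AV) (s : ℝ) :
    V 0 + aV / 2 * s ^ 2 ≤ V s := by
  have hd : Differentiable ℝ V := hC2.differentiable (by norm_num)
  have hderiv : ∀ x, HasDerivAt (fun s => V s - aV / 2 * s ^ 2) (deriv V x - aV * x) x := by
    intro x
    have h1 := (hd x).hasDerivAt
    have h2 := ((hasDerivAt_id x).pow 2).const_mul (aV / 2)
    exact (h1.sub h2).congr_deriv (by simp only [id]; norm_num; ring)
  have hmono : MonotoneOn (fun s => V s - aV / 2 * s ^ 2) (Set.Ici 0) := by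
    refine monotoneOn_of_deriv_nonneg (convex_Ici 0)
      (fun x _ => (hderiv x).continuousAt.continuousWithinAt)
      (fun x _ => (hderiv x).differentiableAt.differentiableWithinAt) fun x hx => ?_
    rw [interior_Ici] at hx
    have hx0 : 0 < x := hx
    rw [(hderiv x).deriv]
    obtain ⟨k, hk1, hk2, hk⟩ := deriv_V_slope hC2 hlb hub x 0
    rw [deriv_V_zero hsym, sub_zero, sub_zero] at hk
    rw [hk]; nlinarith
  have pos : ∀ t : ℝ, 0 ≤ t → V 0 + aV / 2 * t ^ 2 ≤ V t := by
    intro t ht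
    have := hmono (Set.mem_Ici.mpr le_rfl) (Set.mem_Ici.mpr ht) ht
    simp at this
    linarith
  rcases le_total 0 s with h | h
  · exact pos s h
  · have := pos (-s) (by linarith)
    rw [hsym] at this
    linarith [this, neg_sq s]

end Potential

/-! ### Edges, gradients and the Poincaré inequality -/

section Lattice

lemma edgesOf_subset (D : Finset Z2) : edgesOf (D : Set Z2) ⊆
    ((D.image (fun x => (x, x + ((1, 0) : Z2))) ∪ D.image (fun x => (x, x + ((0, 1) : Z2))) ∪
      (D.image (fun x => (x - ((1, 0) : Z2), x)) ∪
        D.image (fun x => (x - ((0, 1) : Z2), x))) : Finset (Z2 × Z2)) : Set (Z2 × Z2)) := by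
  rintro ⟨x, y⟩ ⟨h1, h2⟩
  simp only [Finset.coe_union, Finset.coe_image, Set.mem_union, Set.mem_image, Finset.mem_coe,
    Prod.mk.injEq] at *
  rcases h1 with h1 | h1 <;> rcases h2 with h2 | h2
  · exact Or.inl (Or.inl ⟨x, h2, rfl, h1.symm⟩)
  · exact Or.inr (Or.inl ⟨y, h2, by rw [h1]; abel, rfl⟩)
  · exact Or.inl (Or.inr ⟨x, h2, rfl, h1.symm⟩)
  · exact Or.inr (Or.inr ⟨y, h2, by rw [h1]; abel, rfl⟩)

lemma edgesOf_finite (D : Finset Z2) : (edgesOf (D : Set Z2)).Finite :=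
  (Finset.finite_toSet _).subset (edgesOf_subset D)

/-- The edge set `D*` as a finset. -/
def edgeF (D : Finset Z2) : Finset (Z2 × Z2) := (edgesOf_finite D).toFinset

lemma mem_edgeF {D : Finset Z2} {b : Z2 × Z2} : b ∈ edgeF D ↔ b ∈ edgesOf (D : Set Z2) := by
  simp [edgeF]

lemma card_edgeF_le (D : Finset Z2) : (edgeF D).card ≤ 4 * D.card := by
  have h1 : edgeF D ⊆ _ := fun b hb => Finset.mem_coe.mp (edgesOf_subset D (mem_edgeF.mp hb))
  refine (Finset.card_le_card h1).trans ?_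
  refine (Finset.card_union_le _ _).trans ((add_le_add
    ((Finset.card_union_le _ _).trans (add_le_add Finset.card_image_le Finset.card_image_le))
    ((Finset.card_union_le _ _).trans (add_le_add Finset.card_image_le Finset.card_image_le))).trans
    (by omega))

lemma glEnergy_eq (V : ℝ → ℝ) (D : Finset Z2) (φ : Z2 → ℝ) (h : ↥D → ℝ) :
    glEnergy V D φ h = ∑ b ∈ edgeF D, V (grad (vee D h φ) b) :=
  finsum_mem_eq_finite_toFinset_sum _ (edgesOf_finite D)

lemma adjZ_of_edge {b : Z2 × Z2}
    (h : b.2 = b.1 + ((1, 0) : Z2) ∨ b.2 = b.1 + ((0, 1) : Z2)) : adjZ b.1 b.2 ∧ adjZ b.2 b.1 := by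
  rcases h with h | h <;> rw [h] <;> simp [adjZ]

lemma mem_or_bdry {D : Finset Z2} {b : Z2 × Z2} (hb : b ∈ edgeF D) :
    (b.1 ∈ D ∨ b.1 ∈ bdry (D : Set Z2)) ∧ (b.2 ∈ D ∨ b.2 ∈ bdry (D : Set Z2)) := by
  obtain ⟨h1, h2⟩ := mem_edgeF.mp hb
  obtain ⟨a1, a2⟩ := adjZ_of_edge h1
  by_cases m1 : b.1 ∈ D <;> by_cases m2 : b.2 ∈ D
  · exact ⟨Or.inl m1, Or.inl m2⟩
  · exact ⟨Or.inl m1, Or.inr ⟨m2, b.1, m1, a2⟩⟩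
  · exact ⟨Or.inr ⟨m1, b.2, m2, a1⟩, Or.inl m2⟩
  · exact absurd h2 (by simp [m1, m2])

lemma exists_shift_notMem (D : Finset Z2) :
    ∃ N : ℕ, ∀ x ∈ D, x + (((N : ℤ), 0) : Z2) ∉ D := by
  set m : ℕ := ∑ x ∈ D, x.1.natAbs with hm
  have hle : ∀ x ∈ D, x.1.natAbs ≤ m := fun x hx =>
    Finset.single_le_sum (f := fun x : Z2 => x.1.natAbs) (fun _ _ => Nat.zero_le _) hx
  refine ⟨2 * m + 1, fun x hx hx' => ?_⟩
  have h1 := hle x hx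
  have h2 := hle _ hx'
  simp only [Prod.fst_add] at h2
  push_cast at h2
  omega

/-- Discrete Poincaré inequality: a function vanishing off `D` is controlled pointwise by its
Dirichlet energy over `D*`, by telescoping along a horizontal ray that leaves `D`. -/
lemma poincare (D : Finset Z2) : ∃ C : ℝ, 0 < C ∧ ∀ f : Z2 → ℝ, (∀ x ∉ D, f x = 0) →
    ∀ x, f x ^ 2 ≤ C * ∑ b ∈ edgeF D, grad f b ^ 2 := by
  obtain ⟨N, hN⟩ := exists_shift_notMem D
  refine ⟨(N : ℝ) ^ 2 + 1, by positivity, fun f hf x => ?_⟩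
  set S := ∑ b ∈ edgeF D, grad f b ^ 2 with hS
  have hS0 : 0 ≤ S := Finset.sum_nonneg fun b _ => sq_nonneg _
  by_cases hx : x ∈ D
  swap
  · have h0 : 0 ≤ ((N : ℝ) ^ 2 + 1) * S := by positivity
    rw [hf x hx]; simpa using h0
  have step : ∀ y : Z2, |f y - f (y + ((1, 0) : Z2))| ≤ Real.sqrt S := by
    intro y
    refine Real.abs_le_sqrt ?_
    by_cases hy : (y, y + ((1, 0) : Z2)) ∈ edgeF D
    · have := Finset.single_le_sum (f := fun b => grad f b ^ 2) (fun b _ => sq_nonneg _) hy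
      calc (f y - f (y + ((1, 0) : Z2))) ^ 2 = grad f (y, y + ((1, 0) : Z2)) ^ 2 := by
            unfold grad; ring
        _ ≤ S := this
    · have h1 : ¬ (y ∈ D ∨ y + ((1, 0) : Z2) ∈ D) := fun h =>
        hy (mem_edgeF.mpr ⟨Or.inl rfl, h⟩)
      rw [not_or] at h1
      rw [hf _ h1.1, hf _ h1.2]; simpa using hS0
  have tele : ∀ n : ℕ, |f x - f (x + (((n : ℤ), 0) : Z2))| ≤ n * Real.sqrt S := by
    intro n
    induction n with
    | zero =>
      have h0 : x + (((0 : ℕ) : ℤ), (0 : ℤ)) = x := by ext <;> simp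
      rw [h0]; simp
    | succ n ih =>
      have h1 := step (x + (((n : ℤ), 0) : Z2))
      have h2 : x + (((n : ℤ), 0) : Z2) + ((1, 0) : Z2) = x + ((((n + 1 : ℕ) : ℤ), 0) : Z2) := by
        rw [add_assoc]; simp
      rw [h2] at h1
      calc _ ≤ |f x - f (x + (((n : ℤ), 0) : Z2))|
            + |f (x + (((n : ℤ), 0) : Z2)) - f (x + ((((n + 1 : ℕ) : ℤ), 0) : Z2))| :=
            abs_sub_le _ _ _
        _ ≤ n * Real.sqrt S + Real.sqrt S := add_le_add ih h1
        _ = _ := by push_cast; ring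
  have h3 := tele N
  rw [hf _ (hN x hx), sub_zero] at h3
  calc f x ^ 2 = |f x| ^ 2 := (sq_abs _).symm
    _ ≤ (N * Real.sqrt S) ^ 2 := pow_le_pow_left₀ (abs_nonneg _) h3 2
    _ = (N : ℝ) ^ 2 * S := by rw [mul_pow, Real.sq_sqrt hS0]
    _ ≤ _ := by nlinarith

lemma vee_mem {D : Finset Z2} (h : ↥D → ℝ) (φ : Z2 → ℝ) {x : Z2} (hx : x ∈ D) :
    vee D h φ x = h ⟨x, hx⟩ := by simp [vee, hx]

lemma vee_notMem {D : Finset Z2} (h : ↥D → ℝ) (φ : Z2 → ℝ) {x : Z2} (hx : x ∉ D) :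
    vee D h φ x = φ x := by simp [vee, hx]

lemma vee_add_single {D : Finset Z2} (h : ↥D → ℝ) (φ : Z2 → ℝ) (i : ↥D) (ξ : ℝ) (x : Z2) :
    vee D (h + Pi.single i ξ) φ x = vee D h φ x + ξ * vee D (Pi.single i 1) 0 x := by
  by_cases hx : x ∈ D
  · rw [vee_mem _ _ hx, vee_mem _ _ hx, vee_mem _ _ hx]
    by_cases hi : (⟨x, hx⟩ : ↥D) = i
    · subst hi; simp
    · simp [Pi.single_eq_of_ne hi]
  · simp [vee_notMem _ _ hx]

/-- Gradient across `b` of the indicator function of the site `i`. -/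
def kb {D : Finset Z2} (i : ↥D) (b : Z2 × Z2) : ℝ := grad (vee D (Pi.single i 1) 0) b

lemma grad_add_single {D : Finset Z2} (h : ↥D → ℝ) (φ : Z2 → ℝ) (i : ↥D) (ξ : ℝ) (b : Z2 × Z2) :
    grad (vee D (h + Pi.single i ξ) φ) b = grad (vee D h φ) b + ξ * kb i b := by
  simp only [grad, kb, vee_add_single]; ring

lemma abs_kb_le {D : Finset Z2} (i : ↥D) (b : Z2 × Z2) : |kb i b| ≤ 1 := by
  have h : ∀ x, 0 ≤ vee D (Pi.single i 1) 0 x ∧ vee D (Pi.single i 1) 0 x ≤ 1 := by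
    intro x
    by_cases hx : x ∈ D
    · rw [vee_mem _ _ hx]
      by_cases hi : (⟨x, hx⟩ : ↥D) = i
      · subst hi; simp
      · simp [Pi.single_eq_of_ne hi]
    · simp [vee_notMem _ _ hx]
  unfold kb grad
  rw [abs_le]; constructor <;> linarith [(h b.1).1, (h b.1).2, (h b.2).1, (h b.2).2]

lemma vee_eq_sum {D : Finset Z2} (ζ : ↥D → ℝ) (x : Z2) :
    vee D ζ 0 x = ∑ i, ζ i * vee D (Pi.single i 1) 0 x := by
  by_cases hx : x ∈ D
  · simp_rw [vee_mem _ _ hx]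
    rw [Finset.sum_eq_single ⟨x, hx⟩]
    · simp
    · intro i _ hi; simp [Pi.single_eq_of_ne hi.symm]
    · intro h; exact absurd (Finset.mem_univ _) h
  · simp [vee_notMem _ _ hx]

/-- Summation by parts: pairing `ζ` with the site derivatives gives the gradient of `ζ`, extended
by zero off `D`. -/
lemma sum_kb {D : Finset Z2} (ζ : ↥D → ℝ) (b : Z2 × Z2) :
    ∑ i, ζ i * kb i b = grad (vee D ζ 0) b := by
  unfold kb grad
  rw [vee_eq_sum ζ b.2, vee_eq_sum ζ b.1, ← Finset.sum_sub_distrib]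
  exact Finset.sum_congr rfl fun i _ => by ring

lemma continuous_vee (D : Finset Z2) (φ : Z2 → ℝ) (x : Z2) :
    Continuous fun h : ↥D → ℝ => vee D h φ x := by
  by_cases hx : x ∈ D
  · simp_rw [vee_mem _ _ hx]; fun_prop
  · simp_rw [vee_notMem _ _ hx]; fun_prop

lemma continuous_grad_vee (D : Finset Z2) (φ : Z2 → ℝ) (b : Z2 × Z2) :
    Continuous fun h : ↥D → ℝ => grad (vee D h φ) b :=
  (continuous_vee D φ b.2).sub (continuous_vee D φ b.1)

lemma abs_vee_le {D : Finset Z2} (h : ↥D → ℝ) (φ : Z2 → ℝ) (x : Z2) :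
    |vee D h φ x| ≤ wt h + |φ x| := by
  by_cases hx : x ∈ D
  · rw [vee_mem _ _ hx]; linarith [abs_le_wt h ⟨x, hx⟩, abs_nonneg (φ x)]
  · rw [vee_notMem _ _ hx]; linarith [one_le_wt h]

lemma abs_grad_vee_le {D : Finset Z2} (h : ↥D → ℝ) (φ : Z2 → ℝ) (b : Z2 × Z2) :
    |grad (vee D h φ) b| ≤ (2 + |φ b.1| + |φ b.2|) * wt h := by
  have h1 := abs_vee_le h φ b.1
  have h2 := abs_vee_le h φ b.2
  have h3 := one_le_wt h
  have h4 : |grad (vee D h φ) b| ≤ |vee D h φ b.2| + |vee D h φ b.1| := abs_sub _ _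
  nlinarith [abs_nonneg (φ b.1), abs_nonneg (φ b.2)]

end Lattice

/-! ### The Hamiltonian and moments of the GL measure -/

section GLMeasure

variable {V : ℝ → ℝ} {aV AV : ℝ}

/-- The derivative of the Hamiltonian in the direction of the site `i`. -/
def glGrad (V : ℝ → ℝ) (D : Finset Z2) (φ : Z2 → ℝ) (i : ↥D) (h : ↥D → ℝ) : ℝ :=
  ∑ b ∈ edgeF D, kb i b * deriv V (grad (vee D h φ) b)

lemma continuous_glEnergy (hV : Continuous V) (D : Finset Z2) (φ : Z2 → ℝ) :
    Continuous (glEnergy V D φ) := by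
  have : glEnergy V D φ = fun h => ∑ b ∈ edgeF D, V (grad (vee D h φ) b) :=
    funext (glEnergy_eq V D φ)
  rw [this]
  exact continuous_finsetSum _ fun b _ => hV.comp (continuous_grad_vee D φ b)

lemma continuous_glGrad (hC2 : ContDiff ℝ 2 V) (D : Finset Z2) (φ : Z2 → ℝ) (i : ↥D) :
    Continuous (glGrad V D φ i) := by
  have hd : Continuous (deriv V) := hC2.continuous_deriv (by norm_num)
  exact continuous_finsetSum _ fun b _ =>
    continuous_const.mul (hd.comp (continuous_grad_vee D φ b))

lemma glEnergy_taylor (hC2 : ContDiff ℝ 2 V) (haV : 0 < aV)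
    (hlb : ∀ x, aV ≤ deriv (deriv V) x) (hub : ∀ x, deriv (deriv V) x ≤ AV)
    (D : Finset Z2) (φ : Z2 → ℝ) (i : ↥D) (h : ↥D → ℝ) (ξ : ℝ) :
    |glEnergy V D φ (h + Pi.single i ξ) - glEnergy V D φ h - ξ * glGrad V D φ i h|
      ≤ ((edgeF D).card * AV) * ξ ^ 2 := by
  have hA : 0 ≤ AV := haV.le.trans ((hlb 0).trans (hub 0))
  rw [glEnergy_eq, glEnergy_eq, glGrad, Finset.mul_sum, ← Finset.sum_sub_distrib,
    ← Finset.sum_sub_distrib]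
  refine (Finset.abs_sum_le_sum_abs _ _).trans ?_
  calc _ ≤ ∑ b ∈ edgeF D, AV * ξ ^ 2 := by
        refine Finset.sum_le_sum fun b _ => ?_
        rw [grad_add_single]
        have h1 := V_taylor hC2 haV hlb hub (grad (vee D h φ) b) (ξ * kb i b)
        rw [mul_assoc ξ] at h1
        refine h1.trans (mul_le_mul_of_nonneg_left ?_ hA)
        rw [mul_pow]
        have h2 : kb i b ^ 2 ≤ 1 := (sq_le_one_iff_abs_le_one _).mpr (abs_kb_le i b)
        nlinarith [sq_nonneg ξ]
    _ = _ := by rw [Finset.sum_const, nsmul_eq_mul]; ring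

lemma abs_glGrad_le (hC2 : ContDiff ℝ 2 V) (hsym : ∀ x, V (-x) = V x) (haV : 0 < aV)
    (hlb : ∀ x, aV ≤ deriv (deriv V) x) (hub : ∀ x, deriv (deriv V) x ≤ AV)
    (D : Finset Z2) (φ : Z2 → ℝ) (i : ↥D) (h : ↥D → ℝ) :
    |glGrad V D φ i h| ≤ (AV * ∑ b ∈ edgeF D, (2 + |φ b.1| + |φ b.2|)) * wt h := by
  have hA : 0 ≤ AV := haV.le.trans ((hlb 0).trans (hub 0))
  unfold glGrad
  refine (Finset.abs_sum_le_sum_abs _ _).trans ?_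
  rw [Finset.mul_sum, Finset.sum_mul]
  refine Finset.sum_le_sum fun b _ => ?_
  rw [abs_mul]
  calc _ ≤ 1 * (AV * |grad (vee D h φ) b|) :=
        mul_le_mul (abs_kb_le i b) (abs_deriv_V_le hC2 hsym haV hlb hub _) (abs_nonneg _)
          zero_le_one
    _ ≤ 1 * (AV * ((2 + |φ b.1| + |φ b.2|) * wt h)) := by
        gcongr; exact abs_grad_vee_le h φ b
    _ = _ := by ring

/-- Quadratic lower bound for the Hamiltonian. -/
lemma glEnergy_lower (hC2 : ContDiff ℝ 2 V) (hsym : ∀ x, V (-x) = V x) (haV : 0 < aV)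
    (hlb : ∀ x, aV ≤ deriv (deriv V) x) (hub : ∀ x, deriv (deriv V) x ≤ AV)
    (D : Finset Z2) (φ : Z2 → ℝ) :
    ∃ κ C : ℝ, 0 < κ ∧ ∀ h, κ * ∑ i, h i ^ 2 - C ≤ glEnergy V D φ h := by
  obtain ⟨Cp, hCp, hpo⟩ := poincare D
  set n : ℝ := (Fintype.card ↥D : ℝ) + 1 with hn
  have hn0 : 0 < n := by positivity
  refine ⟨aV / 4 / (n * Cp),
    ∑ b ∈ edgeF D, (aV / 2 * grad (vee D 0 φ) b ^ 2 - V 0), by positivity, fun h => ?_⟩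
  set S := ∑ b ∈ edgeF D, grad (vee D h 0) b ^ 2 with hS
  have h1 : ∑ i, h i ^ 2 ≤ n * Cp * S := by
    have hS0 : 0 ≤ Cp * S := mul_nonneg hCp.le (Finset.sum_nonneg fun b _ => sq_nonneg _)
    calc ∑ i, h i ^ 2 ≤ ∑ i : ↥D, Cp * S := by
          refine Finset.sum_le_sum fun i _ => ?_
          have := hpo (vee D h 0) (fun x hx => by rw [vee_notMem _ _ hx]; rfl) i
          rwa [vee_mem _ _ i.2] at this
      _ = Fintype.card ↥D * (Cp * S) := by simp
      _ ≤ n * Cp * S := by rw [hn]; nlinarith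
  have h2 : aV / 4 / (n * Cp) * ∑ i, h i ^ 2 ≤ aV / 4 * S := by
    calc _ ≤ aV / 4 / (n * Cp) * (n * Cp * S) := by gcongr
      _ = _ := by field_simp
  refine (sub_le_sub_right h2 _).trans ?_
  rw [glEnergy_eq, hS, Finset.mul_sum, ← Finset.sum_sub_distrib]
  refine Finset.sum_le_sum fun b _ => ?_
  have h3 := V_lower hC2 hsym hlb hub (grad (vee D h φ) b)
  have h4 : ∀ x, vee D h φ x = vee D h 0 x + vee D 0 φ x := by
    intro x
    by_cases hx : x ∈ D
    · simp [vee_mem _ _ hx]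
    · simp [vee_notMem _ _ hx]
  have h5 : grad (vee D h φ) b = grad (vee D h 0) b + grad (vee D 0 φ) b := by
    simp only [grad, h4]; ring
  have h6 : grad (vee D h 0) b ^ 2 / 2 ≤ grad (vee D h φ) b ^ 2 + grad (vee D 0 φ) b ^ 2 := by
    rw [h5]; nlinarith [sq_nonneg (grad (vee D h 0) b + 2 * grad (vee D 0 φ) b)]
  nlinarith

/-- Third moments of the GL measure are finite. -/
lemma integrable_wt_GL (hC2 : ContDiff ℝ 2 V) (hsym : ∀ x, V (-x) = V x) (haV : 0 < aV)
    (hlb : ∀ x, aV ≤ deriv (deriv V) x) (hub : ∀ x, deriv (deriv V) x ≤ AV)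
    (D : Finset Z2) (φ : Z2 → ℝ) {P : Measure (↥D → ℝ)} (hP : IsGL V D φ P) :
    Integrable (fun h => wt h ^ 3) P := by
  obtain ⟨-, c, -, hc, rfl⟩ := hP
  refine Integrable.smul_measure ?_ hc
  have hE := (continuous_glEnergy hC2.continuous D φ).measurable
  unfold glFree
  rw [integrable_withDensity_iff (by fun_prop) (ae_of_all _ fun h => ENNReal.ofReal_lt_top)]
  obtain ⟨κ, C, hκ, hlow⟩ := glEnergy_lower hC2 hsym haV hlb hub D φ
  have hg : Integrable (fun h : ↥D → ℝ => ∏ i, Real.exp (-(κ / 2) * h i ^ 2)) :=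
    Integrable.fintype_prod (f := fun (_ : ↥D) (t : ℝ) => Real.exp (-(κ / 2) * t ^ 2))
      fun i => integrable_exp_neg_mul_sq (by positivity)
  refine (hg.const_mul (Real.exp (C + 3 + Fintype.card ↥D * (9 / (2 * κ))))).mono' ?_
    (ae_of_all _ fun h => ?_)
  · exact ((measurable_wt.pow_const 3).mul (by fun_prop)).aestronglyMeasurable
  have hw := one_le_wt h
  rw [ENNReal.toReal_ofReal (Real.exp_pos _).le, Real.norm_of_nonneg (by positivity),
    ← Real.exp_sum, ← Real.exp_add]
  have h1 : wt h ≤ Real.exp (1 + ∑ i, |h i|) := by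
    have := Real.add_one_le_exp (1 + ∑ i, |h i|)
    unfold wt; linarith
  calc wt h ^ 3 * Real.exp (-glEnergy V D φ h)
      ≤ Real.exp (1 + ∑ i, |h i|) ^ 3 * Real.exp (-glEnergy V D φ h) := by gcongr
    _ = Real.exp (3 * (1 + ∑ i, |h i|) - glEnergy V D φ h) := by
        rw [← Real.exp_nat_mul, ← Real.exp_add]; congr 1
    _ ≤ _ := by
        apply Real.exp_le_exp.mpr
        have h2 : 3 * ∑ i, |h i| ≤ κ / 2 * ∑ i, h i ^ 2 + Fintype.card ↥D * (9 / (2 * κ)) := by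
          have h4 : (Fintype.card ↥D : ℝ) * (9 / (2 * κ)) = ∑ i : ↥D, 9 / (2 * κ) := by simp
          rw [h4, Finset.mul_sum, Finset.mul_sum, ← Finset.sum_add_distrib]
          refine Finset.sum_le_sum fun i _ => ?_
          have h5 : κ / 2 * h i ^ 2 + 9 / (2 * κ) - 3 * |h i|
              = (κ * |h i| - 3) ^ 2 / (2 * κ) := by
            rw [← sq_abs (h i)]; field_simp; ring
          have h6 : 0 ≤ (κ * |h i| - 3) ^ 2 / (2 * κ) := by positivity
          linarith
        have h3 := hlow h
        rw [← Finset.mul_sum]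
        linarith

end GLMeasure

/-! ### The Caccioppoli inequality -/

section Caccioppoli

variable {V : ℝ → ℝ} {aV AV : ℝ}

/-- The part of `s` outside `[-M, M]`: `s - M` above `M`, `s + M` below `-M`, and `0` between. -/
def overshoot (M s : ℝ) : ℝ := s - max (-M) (min s M)

lemma overshoot_cases {M : ℝ} (hM : 0 ≤ M) (s : ℝ) :
    (s ≤ -M ∧ overshoot M s = s + M) ∨ (-M ≤ s ∧ s ≤ M ∧ overshoot M s = 0) ∨
      (M ≤ s ∧ overshoot M s = s - M) := by
  unfold overshoot
  rcases le_total s (-M) with h | h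
  · left
    rw [min_eq_left (by linarith), max_eq_left h]
    exact ⟨h, by ring⟩
  · right
    rcases le_total s M with h' | h'
    · left
      rw [min_eq_left h', max_eq_right h]
      exact ⟨h, h', by ring⟩
    · right
      rw [min_eq_right h', max_eq_right (by linarith)]
      exact ⟨h', rfl⟩

lemma measurable_overshoot (M : ℝ) : Measurable (overshoot M) := by
  unfold overshoot; fun_prop

lemma abs_overshoot_le {M : ℝ} (hM : 0 ≤ M) (s : ℝ) : |overshoot M s| ≤ |s| := by
  rcases overshoot_cases hM s with ⟨h, e⟩ | ⟨-, -, e⟩ | ⟨h, e⟩ <;> rw [e]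
  · rw [abs_of_nonpos (by linarith), abs_of_nonpos (by linarith)]; linarith
  · simp
  · rw [abs_of_nonneg (by linarith), abs_of_nonneg (by linarith)]; linarith

lemma overshoot_of_abs_le {M s : ℝ} (h : |s| ≤ M) : overshoot M s = 0 := by
  obtain ⟨h1, h2⟩ := abs_le.mp h
  rw [overshoot, min_eq_left h2, max_eq_right h1, sub_self]

/-- `overshoot M` is firmly nonexpansive, being the residual of a projection. -/
lemma overshoot_firm {M : ℝ} (hM : 0 ≤ M) (s t : ℝ) :
    (overshoot M s - overshoot M t) ^ 2 ≤ (overshoot M s - overshoot M t) * (s - t) := by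
  rcases overshoot_cases hM s with ⟨h, e⟩ | ⟨h, h', e⟩ | ⟨h, e⟩ <;> rw [e] <;>
  rcases overshoot_cases hM t with ⟨k, f⟩ | ⟨k, k', f⟩ | ⟨k, f⟩ <;> rw [f] <;> nlinarith

/-- One-sided second-order expansion of `overshoot M ^ 2`, the squared distance to `[-M, M]`. -/
lemma overshoot_add_sq {M : ℝ} (hM : 0 ≤ M) (s ξ : ℝ) :
    overshoot M (s + ξ) ^ 2 ≤ (overshoot M s + ξ) ^ 2 := by
  rcases overshoot_cases hM s with ⟨h, e⟩ | ⟨h, h', e⟩ | ⟨h, e⟩ <;> rw [e] <;>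
  rcases overshoot_cases hM (s + ξ) with ⟨k, f⟩ | ⟨k, k', f⟩ | ⟨k, f⟩ <;> rw [f] <;> nlinarith

lemma sq_le_overshoot {M : ℝ} (hM : 0 ≤ M) (s : ℝ) : s ^ 2 ≤ 2 * M ^ 2 + 2 * overshoot M s ^ 2 := by
  rcases overshoot_cases hM s with ⟨h, e⟩ | ⟨h, h', e⟩ | ⟨h, e⟩ <;> rw [e]
  · nlinarith [sq_nonneg (s + 2 * M)]
  · nlinarith
  · nlinarith [sq_nonneg (s - 2 * M)]

/-- The Caccioppoli inequality on a single edge, with values `s`, `t` of the difference field and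
`p`, `q` of the cutoff at the two endpoints. -/
lemma edge_caccioppoli {M a A k δ ℓ p q s t : ℝ} (hM : 0 ≤ M) (ha : 0 < a) (hk : a ≤ k)
    (hkA : k ≤ A) (hδ : 0 ≤ δ) (hpq : |q - p| ≤ ℓ) :
    δ * (a / 2) * ((p ^ 2 + q ^ 2) / 2 * (t - s) ^ 2) + a * (overshoot M t - overshoot M s) ^ 2
      - δ * (2 * A ^ 2 / a * ℓ ^ 2) * (2 * M ^ 2 + (overshoot M s ^ 2 + overshoot M t ^ 2))
    ≤ ((δ * q ^ 2 * t + overshoot M t) - (δ * p ^ 2 * s + overshoot M s)) * (k * (t - s)) := by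
  have h1 := overshoot_firm hM t s
  have hs := sq_le_overshoot hM s
  have ht := sq_le_overshoot hM t
  set X := overshoot M t
  set Y := overshoot M s
  set m := (s + t) / 2 with hm
  set S := (p ^ 2 + q ^ 2) / 2 with hS
  have hS0 : 0 ≤ S := by positivity
  have hmT : m ^ 2 ≤ 2 * M ^ 2 + (Y ^ 2 + X ^ 2) := by rw [hm]; nlinarith [sq_nonneg (s - t)]
  have hT : a * (X - Y) ^ 2 ≤ (X - Y) * (k * (t - s)) := by
    nlinarith [mul_le_mul_of_nonneg_right hk (sq_nonneg (X - Y)), mul_le_mul_of_nonneg_left h1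
      (show 0 ≤ k by linarith)]
  have hg : (q - p) ^ 2 ≤ ℓ ^ 2 := by
    rw [← sq_abs]; exact pow_le_pow_left₀ (abs_nonneg _) hpq 2
  -- Young's inequality for the cross term.
  have hy : -(k * ((t - s) * (p + q)) * (m * (q - p)))
      ≤ a / 8 * ((t - s) * (p + q)) ^ 2 + 2 * k ^ 2 / a * (m * (q - p)) ^ 2 := by
    have e : a / 8 * ((t - s) * (p + q)) ^ 2 + 2 * k ^ 2 / a * (m * (q - p)) ^ 2
        + (k * ((t - s) * (p + q)) * (m * (q - p)))
        = (a * ((t - s) * (p + q)) + 4 * k * (m * (q - p))) ^ 2 / (8 * a) := by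
      field_simp; ring
    have : 0 ≤ (a * ((t - s) * (p + q)) + 4 * k * (m * (q - p))) ^ 2 / (8 * a) := by positivity
    linarith
  have hy1 : a / 8 * ((t - s) * (p + q)) ^ 2 ≤ a / 2 * (S * (t - s) ^ 2) := by
    have : (p + q) ^ 2 ≤ 4 * S := by rw [hS]; nlinarith [sq_nonneg (p - q)]
    calc _ = a / 8 * ((t - s) ^ 2 * (p + q) ^ 2) := by ring
      _ ≤ a / 8 * ((t - s) ^ 2 * (4 * S)) := by gcongr
      _ = _ := by ring
  have hy2 : 2 * k ^ 2 / a * (m * (q - p)) ^ 2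
      ≤ 2 * A ^ 2 / a * ℓ ^ 2 * (2 * M ^ 2 + (Y ^ 2 + X ^ 2)) := by
    have hk0 : 0 ≤ k := by linarith
    calc _ = 2 * k ^ 2 / a * (q - p) ^ 2 * m ^ 2 := by ring
      _ ≤ _ := by gcongr
  have hD : a * (S * (t - s) ^ 2) ≤ k * (S * (t - s) ^ 2) := by gcongr
  have key : a / 2 * (S * (t - s) ^ 2) - 2 * A ^ 2 / a * ℓ ^ 2 * (2 * M ^ 2 + (Y ^ 2 + X ^ 2))
      ≤ (q ^ 2 * t - p ^ 2 * s) * (k * (t - s)) := by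
    have e : (q ^ 2 * t - p ^ 2 * s) * (k * (t - s))
        = k * (S * (t - s) ^ 2) + k * ((t - s) * (p + q)) * (m * (q - p)) := by
      rw [hS, hm]; ring
    rw [e]; linarith
  have := mul_le_mul_of_nonneg_left key hδ
  linarith

/-- The Caccioppoli inequality summed over `D*`, for `δ` so small that the Poincaré inequality
absorbs the overshoot terms. -/
lemma sum_caccioppoli (hC2 : ContDiff ℝ 2 V) (haV : 0 < aV)
    (hlb : ∀ x, aV ≤ deriv (deriv V) x) (hub : ∀ x, deriv (deriv V) x ≤ AV)
    (D : Finset Z2) (ψ ψt η : Z2 → ℝ) {M ℓ δ Cp : ℝ} (hM : 0 ≤ M) (hδ : 0 ≤ δ)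
    (hψ : ∀ x ∈ bdry (D : Set Z2), |ψ x - ψt x| ≤ M)
    (hη : ∀ x ∈ bdry (D : Set Z2), η x = 0)
    (hℓ : ∀ b ∈ edgeF D, |grad η b| ≤ ℓ)
    (hCp : ∀ f : Z2 → ℝ, (∀ x ∉ D, f x = 0) →
      ∀ x, f x ^ 2 ≤ Cp * ∑ b ∈ edgeF D, grad f b ^ 2)
    (hsmall : δ * (2 * AV ^ 2 / aV * ℓ ^ 2) * ((edgeF D).card * (2 * Cp)) ≤ aV)
    (h ht : ↥D → ℝ) :
    δ * (aV / 2) * ∑ b ∈ edgeF D, ((η b.1 ^ 2 + η b.2 ^ 2) / 2 *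
        grad (fun z => vee D h ψ z - vee D ht ψt z) b ^ 2)
      - δ * (2 * AV ^ 2 / aV * ℓ ^ 2) * ((edgeF D).card * (2 * M ^ 2))
    ≤ ∑ i : ↥D, (δ * η i ^ 2 * (h i - ht i) + overshoot M (h i - ht i)) *
        (glGrad V D ψ i h - glGrad V D ψt i ht) := by
  set f : Z2 → ℝ := fun z => vee D h ψ z - vee D ht ψt z with hf
  set ζ : ↥D → ℝ := fun i => δ * η i ^ 2 * (h i - ht i) + overshoot M (h i - ht i) with hζ
  set F : Z2 → ℝ := vee D (fun i => overshoot M (h i - ht i)) 0 with hF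
  have fin : ∀ x (hx : x ∈ D), f x = h ⟨x, hx⟩ - ht ⟨x, hx⟩ := fun x hx => by
    simp only [hf, vee_mem _ _ hx]
  have fbd : ∀ x ∈ bdry (D : Set Z2), |f x| ≤ M := fun x hx => by
    have hx' : x ∉ D := hx.1
    simp only [hf, vee_notMem _ _ hx']; exact hψ x hx
  have hFx : ∀ x, (x ∈ D ∨ x ∈ bdry (D : Set Z2)) → F x = overshoot M (f x) := by
    rintro x (hx | hx)
    · rw [hF, vee_mem _ _ hx, fin x hx]
    · have hx' : x ∉ D := hx.1
      rw [hF, vee_notMem _ _ hx', overshoot_of_abs_le (fbd x hx)]; rfl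
  have hζx : ∀ x, (x ∈ D ∨ x ∈ bdry (D : Set Z2)) →
      vee D ζ 0 x = δ * η x ^ 2 * f x + overshoot M (f x) := by
    rintro x (hx | hx)
    · rw [vee_mem _ _ hx, fin x hx]
    · have hx' : x ∉ D := hx.1
      rw [vee_notMem _ _ hx', overshoot_of_abs_le (fbd x hx), hη x hx]; simp
  have parts : ∑ i : ↥D, ζ i * (glGrad V D ψ i h - glGrad V D ψt i ht)
      = ∑ b ∈ edgeF D, grad (vee D ζ 0) b *
          (deriv V (grad (vee D h ψ) b) - deriv V (grad (vee D ht ψt) b)) := by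
    simp_rw [glGrad, ← Finset.sum_sub_distrib, Finset.mul_sum]
    rw [Finset.sum_comm]
    refine Finset.sum_congr rfl fun b _ => ?_
    rw [← sum_kb, Finset.sum_mul]
    exact Finset.sum_congr rfl fun i _ => by ring
  have edge : ∀ b ∈ edgeF D,
      δ * (aV / 2) * ((η b.1 ^ 2 + η b.2 ^ 2) / 2 * grad f b ^ 2) + aV * grad F b ^ 2
        - δ * (2 * AV ^ 2 / aV * ℓ ^ 2) * (2 * M ^ 2 + (F b.1 ^ 2 + F b.2 ^ 2))
      ≤ grad (vee D ζ 0) b *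
          (deriv V (grad (vee D h ψ) b) - deriv V (grad (vee D ht ψt) b)) := by
    intro b hb
    obtain ⟨m1, m2⟩ := mem_or_bdry hb
    obtain ⟨k, hk1, hk2, hk⟩ := deriv_V_slope hC2 hlb hub (grad (vee D h ψ) b)
      (grad (vee D ht ψt) b)
    have e : grad (vee D h ψ) b - grad (vee D ht ψt) b = f b.2 - f b.1 := by
      simp only [grad, hf]; ring
    rw [hk, e, grad, grad, grad, hζx _ m1, hζx _ m2, hFx _ m1, hFx _ m2]
    exact edge_caccioppoli hM haV hk1 hk2 hδ (hℓ b hb)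
  rw [parts]
  refine le_trans ?_ (Finset.sum_le_sum edge)
  rw [Finset.sum_sub_distrib, Finset.sum_add_distrib, ← Finset.mul_sum, ← Finset.mul_sum,
    ← Finset.mul_sum, Finset.sum_add_distrib, Finset.sum_const, nsmul_eq_mul]
  set Q := ∑ b ∈ edgeF D, grad F b ^ 2 with hQ
  have hQ0 : 0 ≤ Q := Finset.sum_nonneg fun b _ => sq_nonneg _
  have hF2 : ∑ b ∈ edgeF D, (F b.1 ^ 2 + F b.2 ^ 2) ≤ (edgeF D).card * (2 * Cp) * Q := by
    have hp := hCp F fun x hx => by rw [hF, vee_notMem _ _ hx]; rfl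
    calc _ ≤ ∑ b ∈ edgeF D, (2 * Cp * Q) := Finset.sum_le_sum fun b _ => by
            linarith [hp b.1, hp b.2]
      _ = _ := by rw [Finset.sum_const, nsmul_eq_mul]; ring
  have hc0 : 0 ≤ δ * (2 * AV ^ 2 / aV * ℓ ^ 2) := by positivity
  have h1 := mul_le_mul_of_nonneg_left hF2 hc0
  have h2 := mul_le_mul_of_nonneg_right hsmall hQ0
  nlinarith

/-- A coupling for which the Dirichlet energy of the difference of the two fields, weighted by the
square of a cutoff `η` vanishing on `∂D`, is controlled by the gradient of the cutoff and the sup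
norm of the difference of the boundary conditions. -/
theorem exists_caccioppoli_coupling (hC2 : ContDiff ℝ 2 V) (hsym : ∀ x, V (-x) = V x)
    (haV : 0 < aV) (hlb : ∀ x, aV ≤ deriv (deriv V) x) (hub : ∀ x, deriv (deriv V) x ≤ AV)
    (D : Finset Z2) (ψ ψt η : Z2 → ℝ) {M ℓ : ℝ} (hM : 0 < M) (hℓ0 : 0 < ℓ)
    (hψ : ∀ x ∈ bdry (D : Set Z2), |ψ x - ψt x| ≤ M)
    (hη : ∀ x ∈ bdry (D : Set Z2), η x = 0) (hη1 : ∀ x, |η x| ≤ 1)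
    (hℓ : ∀ b ∈ edgeF D, |grad η b| ≤ ℓ)
    {P Pt : Measure (↥D → ℝ)} (hP : IsGL V D ψ P) (hPt : IsGL V D ψt Pt) :
    ∃ μ, IsCoupling μ P Pt ∧
      ∑ b ∈ edgeF D, (η b.1 ^ 2 + η b.2 ^ 2) / 2 *
          ∫ ω, grad (fun z => vee D ω.1 ψ z - vee D ω.2 ψt z) b ^ 2 ∂μ
        ≤ 10 * (AV ^ 2 / aV ^ 2) * ℓ ^ 2 * M ^ 2 * ((edgeF D).card + 1) := by
  have hA : 0 < AV := haV.trans_le ((hlb 0).trans (hub 0))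
  have hm := integrable_wt_GL hC2 hsym haV hlb hub D ψ hP
  have hmt := integrable_wt_GL hC2 hsym haV hlb hub D ψt hPt
  have := hP.1
  have := hPt.1
  obtain ⟨-, c, -, -, hPc⟩ := id hP
  obtain ⟨-, ct, -, -, hPtc⟩ := id hPt
  obtain ⟨Cp, hCp0, hCp⟩ := poincare D
  set n : ℝ := ((edgeF D).card : ℝ) with hn
  have hn0 : 0 ≤ n := Nat.cast_nonneg _
  -- `δ` is chosen so small that the Poincaré inequality absorbs the overshoot terms.
  set δ := aV ^ 2 / (4 * AV ^ 2 * ℓ ^ 2 * (n + 1) * Cp) with hδ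
  have hδ0 : 0 < δ := by positivity
  have hsmall : δ * (2 * AV ^ 2 / aV * ℓ ^ 2) * (n * (2 * Cp)) ≤ aV := by
    calc _ ≤ δ * (2 * AV ^ 2 / aV * ℓ ^ 2) * ((n + 1) * (2 * Cp)) := by gcongr; linarith
      _ = aV := by rw [hδ]; field_simp; ring
  -- `n * AV + B1 + B2` is a common bound for the Hessians and the linear growth of both gradients.
  set B1 := AV * ∑ b ∈ edgeF D, (2 + |ψ b.1| + |ψ b.2|) with hB1
  set B2 := AV * ∑ b ∈ edgeF D, (2 + |ψt b.1| + |ψt b.2|) with hB2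
  have hB1' : 0 ≤ B1 := mul_nonneg hA.le (Finset.sum_nonneg fun b _ => by positivity)
  have hB2' : 0 ≤ B2 := mul_nonneg hA.le (Finset.sum_nonneg fun b _ => by positivity)
  have hnA : 0 ≤ n * AV := by positivity
  have hη2 : ∀ x, η x ^ 2 ≤ 1 := fun x => (sq_le_one_iff_abs_le_one _).mpr (hη1 x)
  obtain ⟨μ, hμ, hint, hle⟩ := exists_stationary_coupling
    (continuous_glEnergy hC2.continuous D ψ).measurable
    (continuous_glEnergy hC2.continuous D ψt).measurable hPc hPtc
    (G := glGrad V D ψ) (Gt := glGrad V D ψt)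
    (fun i => (continuous_glGrad hC2 D ψ i).measurable)
    (fun i => (continuous_glGrad hC2 D ψt i).measurable)
    (B := n * AV + B1 + B2) (by positivity)
    (fun i h ξ => (glEnergy_taylor hC2 haV hlb hub D ψ i h ξ).trans
      (mul_le_mul_of_nonneg_right (by linarith) (sq_nonneg ξ)))
    (fun i h ξ => (glEnergy_taylor hC2 haV hlb hub D ψt i h ξ).trans
      (mul_le_mul_of_nonneg_right (by linarith) (sq_nonneg ξ)))
    (fun i h => (abs_glGrad_le hC2 hsym haV hlb hub D ψ i h).trans
      (mul_le_mul_of_nonneg_right (by linarith) (by linarith [one_le_wt h])))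
    (fun i h => (abs_glGrad_le hC2 hsym haV hlb hub D ψt i h).trans
      (mul_le_mul_of_nonneg_right (by linarith) (by linarith [one_le_wt h])))
    hm hmt
    (θ := fun i s => δ * η i ^ 2 * s ^ 2 / 2 + overshoot M s ^ 2 / 2)
    (θ' := fun i s => δ * η i ^ 2 * s + overshoot M s) (K := δ + 1) (by positivity)
    (fun i => by have := measurable_overshoot M; fun_prop)
    (fun i => by have := measurable_overshoot M; fun_prop)
    (fun i s => by positivity)
    (fun i s => by
      have h1 : overshoot M s ^ 2 ≤ s ^ 2 := sq_le_sq.mpr (abs_overshoot_le hM.le s)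
      have h2 : δ * η i ^ 2 * s ^ 2 ≤ δ * 1 * s ^ 2 := by gcongr; exact hη2 i
      have h3 : 0 ≤ δ * s ^ 2 := by positivity
      nlinarith [sq_nonneg s])
    (fun i s => by
      refine (abs_add_le _ _).trans ?_
      have h1 := abs_overshoot_le hM.le s
      rw [abs_mul, abs_of_nonneg (show 0 ≤ δ * η i ^ 2 by positivity)]
      have h2 : δ * η i ^ 2 * |s| ≤ δ * 1 * |s| := by gcongr; exact hη2 i
      linarith)
    (fun i s ξ => by
      have h1 := overshoot_add_sq hM.le s ξ
      have h2 : δ * η i ^ 2 * ξ ^ 2 ≤ δ * 1 * ξ ^ 2 := by gcongr; exact hη2 i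
      have h3 : 0 ≤ δ * ξ ^ 2 := by positivity
      nlinarith [sq_nonneg ξ])
    (ρ := δ * (AV ^ 2 / aV) * ℓ ^ 2 * M ^ 2 * (n + 1)) (by positivity)
  refine ⟨μ, hμ, ?_⟩
  have := hμ.1
  have hI : ∀ b, Integrable
      (fun ω : (↥D → ℝ) × (↥D → ℝ) => grad (fun z => vee D ω.1 ψ z - vee D ω.2 ψt z) b ^ 2) μ := by
    intro b
    have e : ∀ ω : (↥D → ℝ) × (↥D → ℝ), grad (fun z => vee D ω.1 ψ z - vee D ω.2 ψt z) b
        = grad (vee D ω.1 ψ) b - grad (vee D ω.2 ψt) b := fun ω => by simp only [grad]; ring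
    set K1 := 2 + |ψ b.1| + |ψ b.2|
    set K2 := 2 + |ψt b.1| + |ψt b.2|
    refine integrable_of_le_wt2 hm hmt hμ ?_ ((K1 + K2) ^ 2) fun ω => ?_
    · simp_rw [e]
      exact ((((continuous_grad_vee D ψ b).comp continuous_fst).sub
        ((continuous_grad_vee D ψt b).comp continuous_snd)).pow 2).measurable
    · have h1 := abs_grad_vee_le ω.1 ψ b
      have h2 := abs_grad_vee_le ω.2 ψt b
      have w1 := one_le_wt ω.1
      have w2 := one_le_wt ω.2
      have hK1 : 0 ≤ K1 := by positivity
      have hK2 : 0 ≤ K2 := by positivity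
      have h3 : |grad (vee D ω.1 ψ) b - grad (vee D ω.2 ψt) b| ≤ (K1 + K2) * wt2 ω := by
        refine (abs_sub _ _).trans ?_
        unfold wt2
        nlinarith
      rw [abs_of_nonneg (sq_nonneg _), e, ← sq_abs]
      have w := one_le_wt2 ω
      calc _ ≤ ((K1 + K2) * wt2 ω) ^ 2 := pow_le_pow_left₀ (abs_nonneg _) h3 2
        _ = (K1 + K2) ^ 2 * wt2 ω ^ 2 := by ring
        _ ≤ _ := by gcongr; norm_num
  have hpt := fun ω : (↥D → ℝ) × (↥D → ℝ) => sum_caccioppoli hC2 haV hlb hub D ψ ψt η hM.le hδ0.le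
    hψ hη hℓ hCp hsmall ω.1 ω.2
  have hI2 : Integrable (fun ω : (↥D → ℝ) × (↥D → ℝ) => ∑ b ∈ edgeF D,
      ((η b.1 ^ 2 + η b.2 ^ 2) / 2 * grad (fun z => vee D ω.1 ψ z - vee D ω.2 ψt z) b ^ 2)) μ :=
    integrable_finsetSum _ fun b _ => (hI b).const_mul _
  have hmono := integral_mono ((hI2.const_mul (δ * (aV / 2))).sub (integrable_const
    (δ * (2 * AV ^ 2 / aV * ℓ ^ 2) * (n * (2 * M ^ 2)))))
    (integrable_finsetSum _ fun i _ => hint i) hpt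
  rw [integral_finsetSum _ fun i _ => hint i, integral_sub' (hI2.const_mul _) (integrable_const _),
    integral_const_mul, integral_finsetSum _ fun b _ => (hI b).const_mul _] at hmono
  simp_rw [integral_const_mul] at hmono
  simp only [integral_const, probReal_univ, one_smul] at hmono
  have h1 := hmono.trans hle
  have hpos : 0 < δ * (aV / 2) := by positivity
  refine le_of_mul_le_mul_left ?_ hpos
  have h2 : δ * (2 * AV ^ 2 / aV * ℓ ^ 2) * (n * (2 * M ^ 2))
      ≤ δ * (2 * AV ^ 2 / aV * ℓ ^ 2) * ((n + 1) * (2 * M ^ 2)) := by gcongr; linarith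
  have h3 : δ * (aV / 2) * (10 * (AV ^ 2 / aV ^ 2) * ℓ ^ 2 * M ^ 2 * (n + 1))
      = δ * (2 * AV ^ 2 / aV * ℓ ^ 2) * ((n + 1) * (2 * M ^ 2))
        + δ * (AV ^ 2 / aV) * ℓ ^ 2 * M ^ 2 * (n + 1) := by field_simp; ring
  rw [h3]
  linarith

end Caccioppoli

/-! ### Distances, cutoffs and annuli -/

section Geometry

lemma edist2_eq_norm (x y : Z2) :
    edist2 x y = ‖(⟨x.1, x.2⟩ : ℂ) - ⟨y.1, y.2⟩‖ := by
  rw [Complex.norm_eq_sqrt_sq_add_sq]; simp [edist2]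

lemma edist2_nonneg (x y : Z2) : 0 ≤ edist2 x y := Real.sqrt_nonneg _

lemma edist2_triangle (x y z : Z2) : edist2 x z ≤ edist2 x y + edist2 y z := by
  simp only [edist2_eq_norm]; exact norm_sub_le_norm_sub_add_norm_sub _ _ _

lemma edist2_self (x : Z2) : edist2 x x = 0 := by simp [edist2]

lemma edist2_of_adjZ {x y : Z2} (h : adjZ x y) : edist2 x y = 1 := by
  have : ((x.1 : ℝ) - y.1) ^ 2 + ((x.2 : ℝ) - y.2) ^ 2 = 1 := by exact_mod_cast h
  rw [edist2, this, Real.sqrt_one]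

lemma distToSet_nonneg (x : Z2) (S : Set Z2) : 0 ≤ distToSet x S :=
  Real.sInf_nonneg (by rintro _ ⟨y, -, rfl⟩; exact edist2_nonneg x y)

lemma distToSet_le {S : Set Z2} (x : Z2) {y : Z2} (hy : y ∈ S) : distToSet x S ≤ edist2 x y :=
  csInf_le ⟨0, by rintro _ ⟨z, -, rfl⟩; exact edist2_nonneg x z⟩ ⟨y, hy, rfl⟩

lemma distToSet_of_mem {S : Set Z2} {x : Z2} (hx : x ∈ S) : distToSet x S = 0 :=
  le_antisymm ((distToSet_le x hx).trans_eq (edist2_self x)) (distToSet_nonneg x S)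

lemma distToSet_le_add {S : Set Z2} (hS : S.Nonempty) (x y : Z2) :
    distToSet x S ≤ distToSet y S + edist2 x y := by
  have : distToSet x S - edist2 x y ≤ distToSet y S := by
    refine le_csInf (hS.image _) ?_
    rintro _ ⟨z, hz, rfl⟩
    linarith [distToSet_le x hz, edist2_triangle x y z]
  linarith

lemma bdry_nonempty {D : Finset Z2} (hD : D.Nonempty) : (bdry (D : Set Z2)).Nonempty := by
  obtain ⟨x, hx⟩ := hD
  obtain ⟨N, hN⟩ := exists_shift_notMem D
  have hex : ∃ n : ℕ, x + (((n : ℤ), 0) : Z2) ∉ D := ⟨N, hN x hx⟩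
  have h1 := Nat.find_spec hex
  rcases hn : Nat.find hex with _ | n
  · rw [hn] at h1
    have h0 : x + (((0 : ℕ) : ℤ), (0 : ℤ)) = x := by ext <;> simp
    rw [h0] at h1
    exact absurd hx h1
  · have h2 := Nat.find_min hex (m := n) (by omega)
    rw [not_not] at h2
    rw [hn] at h1
    exact ⟨_, h1, _, h2, by simp [adjZ]⟩

lemma edist2_le_diamZ (D : Finset Z2) {x y : Z2} (hx : x ∈ D) (hy : y ∈ D) :
    edist2 x y ≤ diamZ (D : Set Z2) := by
  refine le_csSup ?_ ⟨x, hx, y, hy, rfl⟩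
  have : {d : ℝ | ∃ x ∈ (D : Set Z2), ∃ y ∈ (D : Set Z2), d = edist2 x y}
      ⊆ ((D ×ˢ D).image fun p => edist2 p.1 p.2 : Finset ℝ) := by
    rintro _ ⟨x, hx, y, hy, rfl⟩
    exact Finset.mem_coe.mpr (Finset.mem_image.mpr ⟨(x, y), Finset.mem_product.mpr ⟨hx, hy⟩, rfl⟩)
  exact ((Finset.finite_toSet _).subset this).bddAbove

lemma card_le_diamZ (D : Finset Z2) (hD : D.Nonempty) (hR : 2 ≤ diamZ (D : Set Z2)) :
    (D.card : ℝ) ≤ 9 * diamZ (D : Set Z2) ^ 2 := by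
  obtain ⟨x, hx⟩ := hD
  set R := diamZ (D : Set Z2) with hRdef
  set m : ℕ := ⌊R⌋₊ with hm
  have hmR : (m : ℝ) ≤ R := Nat.floor_le (by linarith)
  have coord : ∀ s t : ℤ, |(s : ℝ) - t| ≤ R → t - m ≤ s ∧ s ≤ t + m := by
    intro s t h
    have h1 : (((s - t).natAbs : ℕ) : ℝ) ≤ R := by
      rw [Nat.cast_natAbs]; push_cast; exact h
    have h2 : (s - t).natAbs ≤ m := Nat.le_floor h1
    omega
  have hsub : D ⊆ Finset.Icc (x.1 - m) (x.1 + m) ×ˢ Finset.Icc (x.2 - m) (x.2 + m) := by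
    intro y hy
    have h := edist2_le_diamZ D hy hx
    have c1 : |(y.1 : ℝ) - x.1| ≤ edist2 y x :=
      Real.abs_le_sqrt (by nlinarith [sq_nonneg ((y.2 : ℝ) - x.2)])
    have c2 : |(y.2 : ℝ) - x.2| ≤ edist2 y x :=
      Real.abs_le_sqrt (by nlinarith [sq_nonneg ((y.1 : ℝ) - x.1)])
    simp only [Finset.mem_product, Finset.mem_Icc]
    exact ⟨coord _ _ (c1.trans h), coord _ _ (c2.trans h)⟩
  have hc : D.card ≤ (2 * m + 1) * (2 * m + 1) := by
    refine (Finset.card_le_card hsub).trans ?_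
    rw [Finset.card_product, Int.card_Icc, Int.card_Icc]
    refine Nat.mul_le_mul ?_ ?_ <;> omega
  have hc' : (D.card : ℝ) ≤ (2 * m + 1) * (2 * m + 1) := by exact_mod_cast hc
  nlinarith

/-- The cutoff `min(1, dist(·, ∂D) / r)`. -/
def cutoff (D : Finset Z2) (r : ℝ) (x : Z2) : ℝ := min 1 (distToSet x (bdry (D : Set Z2)) / r)

lemma cutoff_bdry (D : Finset Z2) (r : ℝ) {x : Z2} (hx : x ∈ bdry (D : Set Z2)) :
    cutoff D r x = 0 := by
  rw [cutoff, distToSet_of_mem hx]; simp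

lemma abs_cutoff_le (D : Finset Z2) {r : ℝ} (hr : 0 < r) (x : Z2) : |cutoff D r x| ≤ 1 := by
  have h1 : 0 ≤ cutoff D r x :=
    le_min zero_le_one (div_nonneg (distToSet_nonneg _ _) hr.le)
  rw [abs_of_nonneg h1]; exact min_le_left _ _

lemma cutoff_inner (D : Finset Z2) {r : ℝ} (hr : 0 < r) {x : Z2} (hx : x ∈ innerSet D r) :
    cutoff D r x = 1 := min_eq_left ((one_le_div hr).mpr hx.2)

lemma abs_grad_cutoff_le (D : Finset Z2) (hD : D.Nonempty) {r : ℝ} (hr : 0 < r) {b : Z2 × Z2}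
    (hb : b ∈ edgeF D) : |grad (cutoff D r) b| ≤ 1 / r := by
  obtain ⟨a1, a2⟩ := adjZ_of_edge (mem_edgeF.mp hb).1
  have h1 := distToSet_le_add (bdry_nonempty hD) b.1 b.2
  have h2 := distToSet_le_add (bdry_nonempty hD) b.2 b.1
  rw [edist2_of_adjZ a1] at h1
  rw [edist2_of_adjZ a2] at h2
  unfold grad cutoff
  refine (abs_min_sub_min_le_max _ _ _ _).trans (max_le (by simp [hr.le]) ?_)
  rw [← sub_div, abs_div, abs_of_pos hr]
  gcongr
  rw [abs_le]; constructor <;> linarith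

lemma finsum_intEdges {D : Finset Z2} {S : Set Z2} (hS : S ⊆ D) (a : Z2 × Z2 → ℝ) :
    ∑ᶠ b ∈ intEdges S, a b = ∑ b ∈ (edgeF D).filter (· ∈ intEdges S), a b := by
  have : intEdges S = (((edgeF D).filter (· ∈ intEdges S) : Finset (Z2 × Z2)) : Set (Z2 × Z2)) := by
    ext b
    simp only [Finset.coe_filter, Set.mem_ofPred_eq, mem_edgeF]
    exact ⟨fun h => ⟨⟨h.1, Or.inl (hS h.2.1)⟩, h⟩, fun h => h.2⟩
  conv_lhs => rw [this]
  exact finsum_mem_coe_finset _ _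

/-- Among `n + 1` disjoint consecutive annuli of width `w` inside `D(r)`, one carries at most the
average share of the total energy. -/
lemma exists_good_annulus (D : Finset Z2) {r w : ℝ} (hw : 0 ≤ w) (n : ℕ) {a : Z2 × Z2 → ℝ}
    (ha : ∀ b, 0 ≤ a b) {E : ℝ}
    (hE : ∑ b ∈ (edgeF D).filter (· ∈ intEdges (innerSet D r)), a b ≤ E) :
    ∃ k : ℕ, k ≤ n ∧ ∑ b ∈ (edgeF D).filter
      (· ∈ intEdges (annul D (r + k * w) (r + k * w + w))), a b ≤ E / (n + 1) := by
  set A : ℕ → Finset (Z2 × Z2) := fun k =>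
    (edgeF D).filter (· ∈ intEdges (annul D (r + k * w) (r + k * w + w))) with hA
  have hlt : ∀ j k : ℕ, j < k → Disjoint (A j) (A k) := by
    intro j k hjk
    rw [Finset.disjoint_left]
    intro b hb hb'
    have h1 := (Finset.mem_filter.mp hb).2.2.1.2.2
    have h2 := (Finset.mem_filter.mp hb').2.2.1.2.1
    have h3 : (j : ℝ) + 1 ≤ k := by exact_mod_cast hjk
    nlinarith [mul_le_mul_of_nonneg_right h3 hw]
  have hdisj : Set.PairwiseDisjoint (↑(Finset.range (n + 1))) A := by
    intro j _ k _ hjk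
    rcases lt_or_gt_of_ne hjk with h | h
    · exact hlt j k h
    · exact (hlt k j h).symm
  have hsum : ∑ k ∈ Finset.range (n + 1), ∑ b ∈ A k, a b ≤ E := by
    rw [← Finset.sum_biUnion hdisj]
    refine le_trans (Finset.sum_le_sum_of_subset_of_nonneg ?_ fun b _ _ => ha b) hE
    intro b hb
    obtain ⟨k, -, hk⟩ := Finset.mem_biUnion.mp hb
    obtain ⟨h1, h2, h3, h4⟩ := Finset.mem_filter.mp hk
    have hk0 : 0 ≤ (k : ℝ) * w := by positivity
    exact Finset.mem_filter.mpr ⟨h1, h2, ⟨h3.1, by linarith [h3.2.1]⟩, ⟨h4.1, by linarith [h4.2.1]⟩⟩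
  obtain ⟨k, hk, hk'⟩ := Finset.exists_le_of_sum_le (s := Finset.range (n + 1))
    (f := fun k => ∑ b ∈ A k, a b) (g := fun _ => E / (n + 1)) (by simp) (by
      rw [Finset.sum_const, Finset.card_range, nsmul_eq_mul]
      push_cast
      rw [mul_div_cancel₀ _ (by positivity)]
      exact hsum)
  exact ⟨k, by simpa [Nat.lt_succ_iff] using hk, hk'⟩

end Geometry

/-! ### The energy estimate -/

/-- Dirichlet energy of the coupled difference in an annulus.
For all `Λ̄ > 0`, `u ∈ ℝ²`, `ε > 0` there is `c = c(Λ̄, ε, V) > 0` such that for every finite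
connected `D` of diameter `R ≥ 2` and tilted boundary conditions `ψ, ψ̃`, there exist
`R₁ ∈ [R^{1−ε}, 2R^{1−ε}]` and a coupling with, for `h̄ = h^ψ − h^ψ̃` and `R₂ = R₁ + R^{1−5ε}`:
`Σ_{b ⊆ {R₁ ≤ dist(·,∂D) < R₂}} E|∇h̄(b)|² ≤ c R^{−ε}` and
`Σ_{b ⊆ D(R₁)} E|∇h̄(b)|² ≤ c R^{3ε}`. -/
theorem annulus_dirichlet_energy
    (V : ℝ → ℝ) (aV AV : ℝ) (L : ℝ≥0)
    (hC2 : ContDiff ℝ 2 V) (hsym : ∀ x, V (-x) = V x)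
    (haV : 0 < aV) (hlb : ∀ x, aV ≤ deriv (deriv V) x)
    (hub : ∀ x, deriv (deriv V) x ≤ AV)
    (hLip : LipschitzWith L (deriv (deriv V))) :
    ∀ (Λ : ℝ) (u : ℝ × ℝ) (ε : ℝ), 0 < Λ → 0 < ε →
    ∃ c : ℝ, 0 < c ∧
      ∀ (D : Finset Z2) (ψ ψt : Z2 → ℝ),
        DiscConnected (D : Set Z2) →
        2 ≤ diamZ (D : Set Z2) →
        (∀ x ∈ bdry (D : Set Z2),
          |ψ x - (u.1 * (x.1 : ℝ) + u.2 * (x.2 : ℝ))|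
            ≤ Λ * Real.log (diamZ (D : Set Z2)) ^ Λ) →
        (∀ x ∈ bdry (D : Set Z2),
          |ψt x - (u.1 * (x.1 : ℝ) + u.2 * (x.2 : ℝ))|
            ≤ Λ * Real.log (diamZ (D : Set Z2)) ^ Λ) →
      ∀ P Pt : Measure (↥D → ℝ), IsGL V D ψ P → IsGL V D ψt Pt →
      ∃ R1 : ℝ,
        diamZ (D : Set Z2) ^ (1 - ε) ≤ R1 ∧ R1 ≤ 2 * diamZ (D : Set Z2) ^ (1 - ε) ∧
      ∃ μ : Measure ((↥D → ℝ) × (↥D → ℝ)),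
        IsCoupling μ P Pt ∧
        (∑ᶠ b ∈ intEdges (annul D R1 (R1 + diamZ (D : Set Z2) ^ (1 - 5 * ε))),
            ∫ ω, (grad (fun z => vee D ω.1 ψ z - vee D ω.2 ψt z) b) ^ 2 ∂μ)
          ≤ c * diamZ (D : Set Z2) ^ (-ε) ∧
        (∑ᶠ b ∈ intEdges (innerSet D R1),
            ∫ ω, (grad (fun z => vee D ω.1 ψ z - vee D ω.2 ψt z) b) ^ 2 ∂μ)
          ≤ c * diamZ (D : Set Z2) ^ (3 * ε) := by
  intro Λ u ε hΛ hε
  have hA : 0 < AV := haV.trans_le ((hlb 0).trans (hub 0))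
  -- The exponent `κ` is such that `log R ≤ R ^ κ / κ` gives `(log R) ^ (2 * Λ) ≤ C * R ^ ε`, and
  -- `1480 = 10 * 2 ^ 2 * 37`, with `37 * R ^ 2` bounding the number of edges plus one.
  set κ := ε / (2 * Λ) with hκ
  have hκ0 : 0 < κ := by positivity
  set c : ℝ := 1480 * (AV ^ 2 / aV ^ 2) * Λ ^ 2 / (κ ^ Λ) ^ 2 with hc
  have hc0 : 0 < c := by positivity
  refine ⟨c, hc0, fun D ψ ψt hconn hR hψ hψt P Pt hP hPt => ?_⟩
  have hD : D.Nonempty := by simpa using hconn.1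
  have hcard := card_le_diamZ D hD hR
  set R := diamZ (D : Set Z2) with hRdef
  have hR0 : 0 < R := by linarith
  set r := R ^ (1 - ε) with hr
  set w := R ^ (1 - 5 * ε) with hw
  have hr0 : 0 < r := Real.rpow_pos_of_pos hR0 _
  have hw0 : 0 < w := Real.rpow_pos_of_pos hR0 _
  have hlog : 0 < Real.log R := Real.log_pos (by linarith)
  set X := Real.log R ^ Λ with hX
  have hX0 : 0 < X := Real.rpow_pos_of_pos hlog _
  obtain ⟨μ, hμ, hen⟩ := exists_caccioppoli_coupling hC2 hsym haV hlb hub D ψ ψt (cutoff D r)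
    (M := 2 * Λ * X) (ℓ := 1 / r) (by positivity) (by positivity)
    (fun x hx => by
      have h1 := abs_le.mp (hψ x hx)
      have h2 := abs_le.mp (hψt x hx)
      rw [abs_le]; constructor <;> linarith [h1.1, h1.2, h2.1, h2.2])
    (fun x hx => cutoff_bdry D r hx) (abs_cutoff_le D hr0)
    (fun b hb => abs_grad_cutoff_le D hD hr0 hb) hP hPt
  set a : Z2 × Z2 → ℝ := fun b =>
    ∫ ω, (grad (fun z => vee D ω.1 ψ z - vee D ω.2 ψt z) b) ^ 2 ∂μ with ha
  have ha0 : ∀ b, 0 ≤ a b := fun b => integral_nonneg fun ω => sq_nonneg _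
  have hXle : X ^ 2 ≤ R ^ ε / (κ ^ Λ) ^ 2 := by
    have h1 : X ≤ (R ^ κ / κ) ^ Λ :=
      Real.rpow_le_rpow hlog.le (Real.log_le_rpow_div hR0.le hκ0) hΛ.le
    have h2 : (R ^ κ / κ) ^ Λ = R ^ (ε / 2) / κ ^ Λ := by
      rw [Real.div_rpow (by positivity) hκ0.le, ← Real.rpow_mul hR0.le]
      congr 2; rw [hκ]; field_simp
    rw [h2] at h1
    calc X ^ 2 ≤ (R ^ (ε / 2) / κ ^ Λ) ^ 2 := pow_le_pow_left₀ hX0.le h1 2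
      _ = _ := by
        rw [div_pow, ← Real.rpow_natCast (R ^ (ε / 2)), ← Real.rpow_mul hR0.le]
        congr 2; push_cast; ring
  have hrR : (1 / r) ^ 2 * R ^ 2 = R ^ (2 * ε) := by
    have h1 : R ^ (2 * ε) * r ^ 2 = R ^ 2 := by
      rw [hr, ← Real.rpow_natCast, ← Real.rpow_natCast, ← Real.rpow_mul hR0.le,
        ← Real.rpow_add hR0]
      congr 1; push_cast; ring
    rw [← h1]; field_simp
  have hE37 : ((edgeF D).card : ℝ) + 1 ≤ 37 * R ^ 2 := by
    have h1 : ((edgeF D).card : ℝ) ≤ 4 * D.card := by exact_mod_cast card_edgeF_le D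
    nlinarith
  have hbound : 10 * (AV ^ 2 / aV ^ 2) * (1 / r) ^ 2 * (2 * Λ * X) ^ 2 * ((edgeF D).card + 1)
      ≤ c * R ^ (3 * ε) := by
    calc _ ≤ 10 * (AV ^ 2 / aV ^ 2) * (1 / r) ^ 2 * (2 * Λ * X) ^ 2 * (37 * R ^ 2) := by gcongr
      _ = 1480 * (AV ^ 2 / aV ^ 2) * Λ ^ 2 * X ^ 2 * ((1 / r) ^ 2 * R ^ 2) := by ring
      _ ≤ 1480 * (AV ^ 2 / aV ^ 2) * Λ ^ 2 * (R ^ ε / (κ ^ Λ) ^ 2) * R ^ (2 * ε) := by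
          rw [hrR]; gcongr
      _ = c * (R ^ ε * R ^ (2 * ε)) := by rw [hc]; ring
      _ = _ := by rw [← Real.rpow_add hR0]; congr 2; ring
  have htot : ∑ b ∈ (edgeF D).filter (· ∈ intEdges (innerSet D r)), a b ≤ c * R ^ (3 * ε) := by
    refine le_trans ?_ (hen.trans hbound)
    rw [Finset.sum_filter]
    refine Finset.sum_le_sum fun b _ => ?_
    split_ifs with hb
    · rw [cutoff_inner D hr0 hb.2.1, cutoff_inner D hr0 hb.2.2]
      exact (one_mul (a b)).symm.le.trans_eq (by norm_num [ha])
    · exact mul_nonneg (by positivity) (ha0 b)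
  obtain ⟨k, hk, hgood⟩ := exists_good_annulus D hw0.le ⌊R ^ (4 * ε)⌋₊ ha0 htot
  have hkR : (k : ℝ) ≤ R ^ (4 * ε) :=
    (Nat.cast_le.mpr hk).trans (Nat.floor_le (by positivity))
  have hkw : k * w ≤ r := by
    calc k * w ≤ R ^ (4 * ε) * w := by gcongr
      _ = r := by rw [hw, ← Real.rpow_add hR0, hr]; congr 1; ring
  have hkw0 : 0 ≤ k * w := by positivity
  refine ⟨r + k * w, by linarith, by linarith, μ, hμ, ?_, ?_⟩
  · rw [finsum_intEdges (D := D) (fun x hx => hx.1)]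
    refine hgood.trans ?_
    have hfl : R ^ (4 * ε) ≤ (⌊R ^ (4 * ε)⌋₊ : ℝ) + 1 := (Nat.lt_floor_add_one _).le
    calc c * R ^ (3 * ε) / ((⌊R ^ (4 * ε)⌋₊ : ℝ) + 1) ≤ c * R ^ (3 * ε) / R ^ (4 * ε) := by gcongr
      _ = c * R ^ (-ε) := by
          rw [mul_div_assoc, ← Real.rpow_sub hR0]; congr 2; ring
  · rw [finsum_intEdges (D := D) (fun x hx => hx.1)]
    refine le_trans (Finset.sum_le_sum_of_subset_of_nonneg ?_ fun b _ _ => ha0 b) htot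
    intro b hb
    obtain ⟨h1, h2, h3, h4⟩ := Finset.mem_filter.mp hb
    exact Finset.mem_filter.mpr ⟨h1, h2, ⟨h3.1, by linarith [h3.2]⟩, ⟨h4.1, by linarith [h4.2]⟩⟩

end
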